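/- arXiv:1905.07574 — 2 statements merged into one kernel-verified Lean document; each statement's English description precedes it below -/
import Mathlib

section
/- In the group VP_4 the following relations hold: (a_{13}^{−1} a_{22})^{c_{12}^{−1}} = (a_{13}^{−1} a_{22})^{c_{11}^{−1}} · [c_{21}, c_{12}^{−1}] and (b_{22} b_{13}^{−1})^{c_{12}} = [c_{12}, c_{21}^{−1}] · (b_{22} b_{13}^{−1})^{c_{11}}. -/
/-!
Write `xᵢⱼ = λᵢⱼ`. Since `x₁₃` commutes with `x₂₄` and `x₃₁` with `x₄₂`, the fourth strand almost
disappears: `a₁₃⁻¹ a₂₂ = x₁₂⁻¹ x₂₄ x₂₃` and `b₂₂ b₁₃⁻¹ = x₃₂ x₄₂ x₂₁⁻¹`. Moreover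
`c₁₁⁻¹ c₁₂ = (x₃₁ x₁₃)^{x₁₂}` and `c₁₂ c₁₁⁻¹ = x₂₁ x₃₁ x₁₃ x₂₁⁻¹`, and both `x₂₄` and `x₄₂` commute
with `x₃₁` and `x₁₃`. The two claims therefore reduce to the identities
`c₂₁ c₁₁ (x₃₁ x₁₃)^{x₂₃} = c₁₂ c₂₁` and `x₃₂ x₃₁ x₁₃ x₃₂⁻¹ c₁₁ c₂₁ = c₂₁ c₁₂` in three strands
(`three_strand_left`, `three_strand_right`), each a consequence of four of the
triangle relations `xₖᵢ xₖⱼ xᵢⱼ = xᵢⱼ xₖⱼ xₖᵢ`.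
-/

namespace Paper

/-- Generators `λ_{i,j}`, `1 ≤ i ≠ j ≤ n` (here `0`-indexed: `i j : Fin n`, `i ≠ j`). -/
abbrev VPGen (n : ℕ) := {p : Fin n × Fin n // p.1 ≠ p.2}

/-- The generator `λ_{i,j}` as an element of the free group (junk value `1` if `i = j`). -/
def flam {n : ℕ} (i j : Fin n) : FreeGroup (VPGen n) :=
  if h : i ≠ j then FreeGroup.of ⟨(i, j), h⟩ else 1

/-- The defining relations of the virtual pure braid group `VP_n`:
`λ_{i,j}λ_{k,l} = λ_{k,l}λ_{i,j}` and `λ_{k,i}λ_{k,j}λ_{i,j} = λ_{i,j}λ_{k,j}λ_{k,i}`,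
where distinct letters stand for distinct indices. -/
def VPRels (n : ℕ) : Set (FreeGroup (VPGen n)) :=
  {r | (∃ i j k l : Fin n, i ≠ j ∧ k ≠ l ∧ i ≠ k ∧ i ≠ l ∧ j ≠ k ∧ j ≠ l ∧
          r = flam i j * flam k l * (flam k l * flam i j)⁻¹) ∨
       (∃ i j k : Fin n, i ≠ j ∧ k ≠ i ∧ k ≠ j ∧
          r = flam k i * flam k j * flam i j * (flam i j * flam k j * flam k i)⁻¹)}

/-- The virtual pure braid group `VP_n`, given by its presentation. -/
abbrev VP (n : ℕ) := PresentedGroup (VPRels n)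

/-- The generator `λ_{i,j}` as an element of `VP_n` (junk value `1` if `i = j`). -/
def glam {n : ℕ} (i j : Fin n) : VP n :=
  if h : i ≠ j then PresentedGroup.of ⟨(i, j), h⟩ else 1

/-- Conjugation `a^b = b⁻¹ * a * b`. -/
def cj {G : Type*} [Group G] (a b : G) : G := b⁻¹ * a * b

/-- Commutator `[a, b] = a⁻¹ * b⁻¹ * a * b`. -/
def cm {G : Type*} [Group G] (a b : G) : G := a⁻¹ * b⁻¹ * a * b

/-- `a_{11} = λ_{1,2}` in `VP_4`. -/
def a11 : VP 4 := glam 0 1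
/-- `b_{11} = λ_{2,1}`. -/
def b11 : VP 4 := glam 1 0
/-- `a_{21} = λ_{1,3}λ_{2,3}`. -/
def a21 : VP 4 := glam 0 2 * glam 1 2
/-- `a_{12} = λ_{1,3}λ_{1,2}`. -/
def a12 : VP 4 := glam 0 2 * glam 0 1
/-- `b_{21} = λ_{3,2}λ_{3,1}`. -/
def b21 : VP 4 := glam 2 1 * glam 2 0
/-- `b_{12} = λ_{2,1}λ_{3,1}`. -/
def b12 : VP 4 := glam 1 0 * glam 2 0
/-- `a_{31} = λ_{1,4}λ_{2,4}λ_{3,4}`. -/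
def a31 : VP 4 := glam 0 3 * glam 1 3 * glam 2 3
/-- `a_{22} = λ_{1,4}λ_{2,4}λ_{1,3}λ_{2,3}`. -/
def a22 : VP 4 := glam 0 3 * glam 1 3 * glam 0 2 * glam 1 2
/-- `a_{13} = λ_{1,4}λ_{1,3}λ_{1,2}`. -/
def a13 : VP 4 := glam 0 3 * glam 0 2 * glam 0 1
/-- `b_{31} = λ_{4,3}λ_{4,2}λ_{4,1}`. -/
def b31 : VP 4 := glam 3 2 * glam 3 1 * glam 3 0
/-- `b_{22} = λ_{3,2}λ_{3,1}λ_{4,2}λ_{4,1}`. -/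
def b22 : VP 4 := glam 2 1 * glam 2 0 * glam 3 1 * glam 3 0
/-- `b_{13} = λ_{2,1}λ_{3,1}λ_{4,1}`. -/
def b13 : VP 4 := glam 1 0 * glam 2 0 * glam 3 0
/-- `c_{11} = b_{11}a_{11}`. -/
def c11 : VP 4 := b11 * a11
/-- `c_{21} = b_{21}a_{21}`. -/
def c21 : VP 4 := b21 * a21
/-- `c_{12} = b_{12}a_{12}`. -/
def c12 : VP 4 := b12 * a12
/-- `c_{31} = b_{31}a_{31}`. -/
def c31 : VP 4 := b31 * a31
/-- `c_{22} = b_{22}a_{22}`. -/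
def c22 : VP 4 := b22 * a22
/-- `c_{13} = b_{13}a_{13}`. -/
def c13 : VP 4 := b13 * a13

theorem mk_flam {n : ℕ} (i j : Fin n) : PresentedGroup.mk (VPRels n) (flam i j) = glam i j := by
  unfold flam glam
  split
  · rfl
  · exact map_one _

theorem glam_comm {n : ℕ} {i j k l : Fin n} (hij : i ≠ j) (hkl : k ≠ l) (hik : i ≠ k)
    (hil : i ≠ l) (hjk : j ≠ k) (hjl : j ≠ l) :
    (glam i j : VP n) * glam k l = glam k l * glam i j := by
  have h : PresentedGroup.mk (VPRels n) (flam i j * flam k l * (flam k l * flam i j)⁻¹) = 1 :=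
    PresentedGroup.one_of_mem (Or.inl ⟨i, j, k, l, hij, hkl, hik, hil, hjk, hjl, rfl⟩)
  rwa [map_mul, map_inv, mul_inv_eq_one, map_mul, map_mul, mk_flam, mk_flam] at h

theorem glam_triangle {n : ℕ} {k i j : Fin n} (hij : i ≠ j) (hki : k ≠ i) (hkj : k ≠ j) :
    (glam k i : VP n) * glam k j * glam i j = glam i j * glam k j * glam k i := by
  have h : PresentedGroup.mk (VPRels n)
      (flam k i * flam k j * flam i j * (flam i j * flam k j * flam k i)⁻¹) = 1 :=
    PresentedGroup.one_of_mem (Or.inr ⟨i, j, k, hij, hki, hkj, rfl⟩)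
  rwa [map_mul, map_inv, mul_inv_eq_one, map_mul, map_mul, map_mul, map_mul,
    mk_flam, mk_flam, mk_flam] at h

section ThreeStrands

variable {G : Type*} [Group G] {x12 x21 x13 x31 x23 x32 : G}

/-- The identity `c₂₁ c₁₁ (x₃₁ x₁₃)^{x₂₃} = c₁₂ c₂₁`. -/
theorem three_strand_left
    (h123 : x12 * x13 * x23 = x23 * x13 * x12) (h213 : x21 * x23 * x13 = x13 * x23 * x21)
    (h132 : x13 * x12 * x32 = x32 * x12 * x13) (h321 : x32 * x31 * x21 = x21 * x31 * x32) :
    (x32 * x31 * (x13 * x23)) * (x21 * x12) * (x23⁻¹ * (x31 * x13) * x23) =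
      (x21 * x31 * (x13 * x12)) * (x32 * x31 * (x13 * x23)) := by
  calc
    _ = x32 * x31 * (x13 * x23 * x21) * x12 * x23⁻¹ * x31 * x13 * x23 := by group
    _ = x32 * x31 * x21 * (x23 * x13 * x12) * x23⁻¹ * x31 * x13 * x23 := by rw [← h213]; group
    _ = (x32 * x31 * x21) * x12 * x13 * x31 * x13 * x23 := by rw [← h123]; group
    _ = x21 * x31 * (x32 * x12 * x13) * x31 * x13 * x23 := by rw [h321]; group
    _ = _ := by rw [← h132]; group

/-- The identity `x₃₂ (x₃₁ x₁₃) x₃₂⁻¹ c₁₁ c₂₁ = c₂₁ c₁₂`. -/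
theorem three_strand_right
    (h123 : x12 * x13 * x23 = x23 * x13 * x12) (h312 : x31 * x32 * x12 = x12 * x32 * x31)
    (h231 : x23 * x21 * x31 = x31 * x21 * x23) (h321 : x32 * x31 * x21 = x21 * x31 * x32) :
    (x32 * (x31 * x13) * x32⁻¹) * (x21 * x12) * (x32 * x31 * (x13 * x23)) =
      (x32 * x31 * (x13 * x23)) * (x21 * x31 * (x13 * x12)) := by
  calc
    _ = x32 * x31 * x13 * x32⁻¹ * x21 * (x12 * x32 * x31) * x13 * x23 := by group
    _ = x32 * x31 * x13 * x32⁻¹ * (x21 * x31 * x32) * x12 * x13 * x23 := by rw [← h312]; group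
    _ = x32 * x31 * x13 * x31 * x21 * (x12 * x13 * x23) := by rw [← h321]; group
    _ = x32 * x31 * x13 * (x31 * x21 * x23) * x13 * x12 := by rw [h123]; group
    _ = _ := by rw [← h231]; group

end ThreeStrands

/-- If `Q` is the conjugate `X⁻¹ (u⁻¹ w) X` and `v u Q = w v`, then `X^{w⁻¹} = X^{u⁻¹} [v, w⁻¹]`. -/
theorem cj_inv_eq_of {G : Type*} [Group G] {X u v w Q : G}
    (hQ : u⁻¹ * w * X = X * Q) (h : v * u * Q = w * v) :
    cj X w⁻¹ = cj X u⁻¹ * cm v w⁻¹ := by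
  have hQ' : Q = u⁻¹ * v⁻¹ * (w * v) := by rw [← h]; group
  have hX : w * X = u * X * (u⁻¹ * v⁻¹ * (w * v)) := by
    rw [← hQ', mul_assoc u, ← hQ]; group
  simp only [cj, cm, inv_inv]
  rw [hX]; group

/-- If `Q` is the conjugate `Y (w u⁻¹) Y⁻¹` and `Q u v = v w`, then `Y^w = [w, v⁻¹] Y^u`. -/
theorem cj_eq_of {G : Type*} [Group G] {Y u v w Q : G}
    (hQ : Y * (w * u⁻¹) = Q * Y) (h : Q * u * v = v * w) :
    cj Y w = cm w v⁻¹ * cj Y u := by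
  have hQ' : Q = v * w * v⁻¹ * u⁻¹ := by rw [← h]; group
  have hY : Y * w = v * w * v⁻¹ * u⁻¹ * Y * u := by
    rw [← hQ', ← hQ]; group
  simp only [cj, cm, inv_inv]
  rw [mul_assoc w⁻¹ Y w, hY]; group

theorem a13_inv_mul_a22 : a13⁻¹ * a22 = (glam 0 1)⁻¹ * glam 1 3 * glam 1 2 := by
  have h : (glam 1 3 : VP 4) * glam 0 2 = glam 0 2 * glam 1 3 := by
    apply glam_comm <;> decide
  calc
    _ = (glam 0 1 : VP 4)⁻¹ * (glam 0 2)⁻¹ * (glam 1 3 * glam 0 2) * glam 1 2 := by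
      rw [a13, a22]; group
    _ = _ := by rw [h]; group

theorem b22_mul_b13_inv : b22 * b13⁻¹ = glam 2 1 * glam 3 1 * (glam 1 0)⁻¹ := by
  have h : (glam 2 0 : VP 4) * glam 3 1 = glam 3 1 * glam 2 0 := by
    apply glam_comm <;> decide
  calc
    _ = (glam 2 1 : VP 4) * (glam 2 0 * glam 3 1) * (glam 2 0)⁻¹ * (glam 1 0)⁻¹ := by
      rw [b22, b13]; group
    _ = _ := by rw [h]; group

/-- Lemma 4.9: in `VP_4`,
`(a_{13}⁻¹ a_{22})^{c_{12}⁻¹} = (a_{13}⁻¹ a_{22})^{c_{11}⁻¹} [c_{21}, c_{12}⁻¹]` and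
`(b_{22} b_{13}⁻¹)^{c_{12}} = [c_{12}, c_{21}⁻¹] (b_{22} b_{13}⁻¹)^{c_{11}}`. -/
theorem statement16 :
    cj (a13⁻¹ * a22) c12⁻¹ = cj (a13⁻¹ * a22) c11⁻¹ * cm c21 c12⁻¹ ∧
    cj (b22 * b13⁻¹) c12 = cm c12 c21⁻¹ * cj (b22 * b13⁻¹) c11 := by
  constructor
  · rw [a13_inv_mul_a22]
    refine cj_inv_eq_of (Q := (glam 1 2)⁻¹ * (glam 2 0 * glam 0 2) * glam 1 2) ?_ ?_
    · have h : Commute (glam 2 0 * glam 0 2 : VP 4) (glam 1 3) :=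
        Commute.mul_left (by apply glam_comm <;> decide) (by apply glam_comm <;> decide)
      calc
        _ = (glam 0 1 : VP 4)⁻¹ * (glam 2 0 * glam 0 2 * glam 1 3) * glam 1 2 := by
          simp only [c11, c12, b11, a11, b12, a12]; group
        _ = _ := by rw [h.eq]; group
    · apply three_strand_left <;> apply glam_triangle <;> decide
  · rw [b22_mul_b13_inv]
    refine cj_eq_of (Q := glam 2 1 * (glam 2 0 * glam 0 2) * (glam 2 1)⁻¹) ?_ ?_
    · have h : Commute (glam 2 0 * glam 0 2 : VP 4) (glam 3 1) :=
        Commute.mul_left (by apply glam_comm <;> decide) (by apply glam_comm <;> decide)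
      calc
        _ = (glam 2 1 : VP 4) * (glam 3 1 * (glam 2 0 * glam 0 2)) * (glam 1 0)⁻¹ := by
          simp only [c11, c12, b11, a11, b12, a12]; group
        _ = _ := by rw [← h.eq]; group
    · apply three_strand_right <;> apply glam_triangle <;> decide

end Paper
end

section
/- The subgroup T_3 = ⟨a_{31}, a_{22}, a_{13}, b_{31}, b_{22}, b_{13}⟩ of VP_4 has the following presentation: the map sending abstract generators x_{31}, x_{22}, x_{13}, y_{31}, y_{22}, y_{13} to a_{31}, a_{22}, a_{13}, b_{31}, b_{22}, b_{13} induces an isomorphism onto T_3 from the group presented by these six generators and the relations, for all k, m ∈ ℤ: [x_{31}, x_{22}^{z_{22}^{m} z_{31}^{−m}}] = 1, [x_{31}, x_{13}^{z_{13}^{k} z_{22}^{m−k} z_{31}^{−m}}] = 1, [x_{22}^{z_{22}^{m} z_{31}^{−m}}, x_{13}^{z_{13}^{k} z_{22}^{m−k} z_{31}^{−m}}] = 1, [y_{31}, y_{22}^{z_{22}^{m} z_{31}^{−m}}] = 1, [y_{31}, y_{13}^{z_{13}^{k} z_{22}^{m−k} z_{31}^{−m}}] = 1, [y_{22}^{z_{22}^{m}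 z_{31}^{−m}}, y_{13}^{z_{13}^{k} z_{22}^{m−k} z_{31}^{−m}}] = 1, where z_{31} = y_{31}x_{31}, z_{22} = y_{22}x_{22}, z_{13} = y_{13}x_{13} (corresponding to c_{31} = b_{31}a_{31}, c_{22} = b_{22}a_{22}, c_{13} = b_{13}a_{13}). -/
/-!
Write `T` for the abstract group given by the presentation (`TT` below) and `f : T → VP 4` for the
map in question.

*The map exists.* Put `s = c₁₁`, `t = c₂₁`, `v = t c₃₁ c₂₂⁻¹` and `u = s c₂₂ c₁₃⁻¹` in `VP 4`. Then
`s` commutes with the generators of index `31`, `22` and with `t`; `t` commutes with those of index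
`31`; `v` with those of index `22`, `13`; `u` with those of index `13` (`HRel`, `hrelV`). These facts
reduce to computations in `VP 3` by omitting or doubling strands. Since
`s^k t^m = u^k v^m c₁₃^k c₂₂^{m-k} c₃₁^{-m}`, every relator is the conjugate by `s^k t^m` of one of
the six commutators of generators with `k = m = 0`.

*An extension of `T`.* The two conjugation rules define an action of `ℤ²` on `T`, because the
corresponding endomorphisms of the free group permute the relators. The semidirect product
`HH = T ⋊ ℤ²` is presented by `HRel` (`hrelH`, `HRel.lift`), so `f` extends to `HH`.

*Injectivity.* `VP 4` acts on the free group `W` of rank four in two ways, by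
`λ_{i,j} : X_j ↦ X_i X_j X_i⁻¹` (`R0`) and by the transposed formula (`Rinf`). There are
homomorphisms `iH0`, `iHInf : W → HH` which intertwine these actions, restricted to `T` along `f`,
with conjugation in `HH` (`iH0_equiv`, `iHInf_equiv`). Hence an element `w` of the kernel of `f`
commutes with both images, in particular with `x₃₁` and `y₁₃`, which lie in the image of `iHInf`.
The image of `iH0` is normal, with quotient the right-angled Artin group on the path
`a — s — v — b`, where `a`, `b` are the images of `x₃₁`, `y₁₃` (`PP`, `sec_proj`). The centralisers
of the two ends of the path meet trivially (`PP_centralizer`), so `w = iH0 n` for some `n`. Finally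
`R0`, pulled back along `iH0`, is the action of `W` on itself by inner automorphisms (`R0_iH0`);
thus `n` is central in `W`, and `n = 1`.
-/

namespace Paper

/-- Abstract generators for the presentation of `T_3 ≤ VP_4`. -/
inductive TGen3
  | x31 | x22 | x13 | y31 | y22 | y13
  deriving DecidableEq

namespace TGen3
open FreeGroup
/-- `z_{31} = y_{31}x_{31}` (corresponding to `c_{31} = b_{31}a_{31}`). -/
def z31 : FreeGroup TGen3 := of y31 * of x31
/-- `z_{22} = y_{22}x_{22}` (corresponding to `c_{22} = b_{22}a_{22}`). -/
def z22 : FreeGroup TGen3 := of y22 * of x22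
/-- `z_{13} = y_{13}x_{13}` (corresponding to `c_{13} = b_{13}a_{13}`). -/
def z13 : FreeGroup TGen3 := of y13 * of x13
/-- The defining relations of Theorem 5.7, for all `k, m ∈ ℤ`. -/
def rels : Set (FreeGroup TGen3) :=
  {r | ∃ k m : ℤ,
    r = cm (of x31) (cj (of x22) (z22 ^ m * z31 ^ (-m))) ∨
    r = cm (of x31) (cj (of x13) (z13 ^ k * z22 ^ (m - k) * z31 ^ (-m))) ∨
    r = cm (cj (of x22) (z22 ^ m * z31 ^ (-m)))
           (cj (of x13) (z13 ^ k * z22 ^ (m - k) * z31 ^ (-m))) ∨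
    r = cm (of y31) (cj (of y22) (z22 ^ m * z31 ^ (-m))) ∨
    r = cm (of y31) (cj (of y13) (z13 ^ k * z22 ^ (m - k) * z31 ^ (-m))) ∨
    r = cm (cj (of y22) (z22 ^ m * z31 ^ (-m)))
           (cj (of y13) (z13 ^ k * z22 ^ (m - k) * z31 ^ (-m)))}
end TGen3

/-! ### The auxiliary relations -/

open TGen3

/-- The relations satisfied by the images `e` of the six generators together with two further
elements `s`, `t` (in `VP_4`: `s = c₁₁`, `t = c₂₁`). They imply every relation of `TGen3.rels`,
and conversely they define the extension `T ⋊ ℤ²` of the abstract group `T`. The elements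
`v = t z₃₁ z₂₂⁻¹` and `u = s z₂₂ z₁₃⁻¹` are written out in the fields. -/
structure HRel {G : Type*} [Group G] (e : TGen3 → G) (s t : G) : Prop where
  x31x22 : Commute (e x31) (e x22)
  x31x13 : Commute (e x31) (e x13)
  x22x13 : Commute (e x22) (e x13)
  y31y22 : Commute (e y31) (e y22)
  y31y13 : Commute (e y31) (e y13)
  y22y13 : Commute (e y22) (e y13)
  sx31 : Commute s (e x31)
  sy31 : Commute s (e y31)
  sx22 : Commute s (e x22)
  sy22 : Commute s (e y22)
  st : Commute s t
  tx31 : Commute t (e x31)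
  ty31 : Commute t (e y31)
  vx22 : Commute (t * (e y31 * e x31) * (e y22 * e x22)⁻¹) (e x22)
  vy22 : Commute (t * (e y31 * e x31) * (e y22 * e x22)⁻¹) (e y22)
  vx13 : Commute (t * (e y31 * e x31) * (e y22 * e x22)⁻¹) (e x13)
  vy13 : Commute (t * (e y31 * e x31) * (e y22 * e x22)⁻¹) (e y13)
  ux13 : Commute (s * (e y22 * e x22) * (e y13 * e x13)⁻¹) (e x13)
  uy13 : Commute (s * (e y22 * e x22) * (e y13 * e x13)⁻¹) (e y13)

section HRel

variable {G : Type*} [Group G]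

lemma cj_eq_of_commute {a g h : G} (hc : Commute a (g * h⁻¹)) : cj a g = cj a h := by
  have h1 : a * g = g * h⁻¹ * a * h := by
    rw [← hc.eq]; group
  unfold cj
  rw [mul_assoc, h1]; group

lemma cm_eq_one {a b : G} (h : Commute a b) : cm a b = 1 := by
  unfold cm
  rw [mul_assoc, h.eq]; group

lemma commute_of_cm {a b : G} (h : cm a b = 1) : Commute a b := by
  have : a * b = b * a * cm a b := by unfold cm; group
  show a * b = b * a
  rw [this, h, mul_one]

lemma commute_of_cj {a g h : G} (hc : cj a g = cj a h) : Commute (g * h⁻¹) a := by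
  have : g * h⁻¹ * a = g * (cj a h) * h⁻¹ := by unfold cj; group
  show _ = _
  rw [this, ← hc]; unfold cj; group

lemma cj_cm (a b g : G) : cm (cj a g) (cj b g) = cj (cm a b) g := by
  unfold cm cj; group

lemma cj_one_left (g : G) : cj 1 g = 1 := by unfold cj; group

lemma cj_self_of_commute {a g : G} (h : Commute a g) : cj a g = a := by
  unfold cj; rw [mul_assoc, h.eq]; group

lemma map_cj {H : Type*} [Group H] (f : G →* H) (a b : G) : f (cj a b) = cj (f a) (f b) := by
  simp [cj]

lemma map_cm {H : Type*} [Group H] (f : G →* H) (a b : G) : f (cm a b) = cm (f a) (f b) := by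
  simp [cm]

variable {e : TGen3 → G} {s t : G}

/-- The identity `t^m = v^m z₂₂^m z₃₁^{-m}`: it comes from raising `t z₃₁ = v z₂₂` to the power
`m`, since the factors on each side commute. -/
lemma HRel.word22 (h : HRel e s t) (m : ℤ) :
    ∃ v' : G, Commute v' (e x22) ∧ Commute v' (e y22) ∧ Commute v' (e x13) ∧ Commute v' (e y13) ∧
      Commute v' s ∧
      t ^ m = v' * ((e y22 * e x22) ^ m * (e y31 * e x31) ^ (-m)) := by
  set v := t * (e y31 * e x31) * (e y22 * e x22)⁻¹ with hv
  refine ⟨v ^ m, h.vx22.zpow_left m, h.vy22.zpow_left m, h.vx13.zpow_left m, h.vy13.zpow_left m,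
    ?_, ?_⟩
  · apply Commute.zpow_left
    exact ((h.st.mul_right (h.sy31.mul_right h.sx31)).mul_right
      (h.sy22.mul_right h.sx22).inv_right).symm
  · have h1 : t * (e y31 * e x31) = v * (e y22 * e x22) := by rw [hv]; group
    have h2 : (t * (e y31 * e x31)) ^ m = t ^ m * (e y31 * e x31) ^ m :=
      (h.ty31.mul_right h.tx31).mul_zpow m
    have h3 : (v * (e y22 * e x22)) ^ m = v ^ m * (e y22 * e x22) ^ m :=
      (h.vy22.mul_right h.vx22).mul_zpow m
    rw [← mul_assoc, ← h3, ← h1, h2]; group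

/-- The identity `s^k = u^k z₁₃^k z₂₂^{-k}`, obtained from `s z₂₂ = u z₁₃`. -/
lemma HRel.word13 (h : HRel e s t) (k : ℤ) :
    ∃ u' : G, Commute u' (e x13) ∧ Commute u' (e y13) ∧
      s ^ k = u' * ((e y13 * e x13) ^ k * (e y22 * e x22) ^ (-k)) := by
  set u := s * (e y22 * e x22) * (e y13 * e x13)⁻¹ with hu
  refine ⟨u ^ k, h.ux13.zpow_left k, h.uy13.zpow_left k, ?_⟩
  have h1 : s * (e y22 * e x22) = u * (e y13 * e x13) := by rw [hu]; group
  have h2 : (s * (e y22 * e x22)) ^ k = s ^ k * (e y22 * e x22) ^ k :=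
    (h.sy22.mul_right h.sx22).mul_zpow k
  have h3 : (u * (e y13 * e x13)) ^ k = u ^ k * (e y13 * e x13) ^ k :=
    (h.uy13.mul_right h.ux13).mul_zpow k
  rw [← mul_assoc, ← h3, ← h1, h2]; group

lemma HRel.cj31 (h : HRel e s t) (k m : ℤ) {a : G} (ha : a = e x31 ∨ a = e y31) :
    cj a (s ^ k * t ^ m) = a := by
  apply cj_self_of_commute
  rcases ha with rfl | rfl
  · exact (h.sx31.symm.zpow_right k).mul_right (h.tx31.symm.zpow_right m)
  · exact (h.sy31.symm.zpow_right k).mul_right (h.ty31.symm.zpow_right m)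

lemma HRel.cj22 (h : HRel e s t) (k m : ℤ) {a : G} (ha : a = e x22 ∨ a = e y22) :
    cj a (s ^ k * t ^ m) = cj a ((e y22 * e x22) ^ m * (e y31 * e x31) ^ (-m)) := by
  obtain ⟨v, h1, h2, -, -, -, h6⟩ := h.word22 m
  apply cj_eq_of_commute
  rw [h6, ← mul_assoc, mul_inv_cancel_right]
  rcases ha with rfl | rfl
  · exact (h.sx22.symm.zpow_right k).mul_right h1.symm
  · exact (h.sy22.symm.zpow_right k).mul_right h2.symm

/-- Combining the two identities, `s^k t^m = v^m u^k z₁₃^k z₂₂^{m-k} z₃₁^{-m}`, where `u` and `v`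
commute with the generators of index `13`. -/
lemma HRel.cj13 (h : HRel e s t) (k m : ℤ) {a : G} (ha : a = e x13 ∨ a = e y13) :
    cj a (s ^ k * t ^ m) =
      cj a ((e y13 * e x13) ^ k * (e y22 * e x22) ^ (m - k) * (e y31 * e x31) ^ (-m)) := by
  obtain ⟨v, -, -, h3, h4, h5, h6⟩ := h.word22 m
  obtain ⟨u, k1, k2, k3⟩ := h.word13 k
  apply cj_eq_of_commute
  have : s ^ k * t ^ m * ((e y13 * e x13) ^ k * (e y22 * e x22) ^ (m - k) *
      (e y31 * e x31) ^ (-m))⁻¹ = v * u := by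
    rw [h6, ← mul_assoc, ← (h5.zpow_right k).eq, k3]; group
  rw [this]
  rcases ha with rfl | rfl
  · exact h3.symm.mul_right k1.symm
  · exact h4.symm.mul_right k2.symm

/-- Each relation of `TGen3.rels` is the conjugate by `s^k t^m` of one of the six basic
commutations. -/
lemma HRel.rels_eq_one (h : HRel e s t) : ∀ r ∈ TGen3.rels, FreeGroup.lift e r = 1 := by
  rintro r ⟨k, m, hr⟩
  have hz31 : FreeGroup.lift e z31 = e y31 * e x31 := by simp [z31]
  have hz22 : FreeGroup.lift e z22 = e y22 * e x22 := by simp [z22]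
  have hz13 : FreeGroup.lift e z13 = e y13 * e x13 := by simp [z13]
  rcases hr with rfl | rfl | rfl | rfl | rfl | rfl <;>
    simp only [map_cm, map_cj, map_mul, map_zpow, hz31, hz22, hz13, FreeGroup.lift_apply_of]
  · rw [← h.cj22 k m (.inl rfl), ← h.cj31 k m (.inl rfl), cj_cm, cm_eq_one h.x31x22, cj_one_left]
  · rw [← h.cj13 k m (.inl rfl), ← h.cj31 k m (.inl rfl), cj_cm, cm_eq_one h.x31x13, cj_one_left]
  · rw [← h.cj13 k m (.inl rfl), ← h.cj22 k m (.inl rfl), cj_cm, cm_eq_one h.x22x13, cj_one_left]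
  · rw [← h.cj22 k m (.inr rfl), ← h.cj31 k m (.inr rfl), cj_cm, cm_eq_one h.y31y22, cj_one_left]
  · rw [← h.cj13 k m (.inr rfl), ← h.cj31 k m (.inr rfl), cj_cm, cm_eq_one h.y31y13, cj_one_left]
  · rw [← h.cj13 k m (.inr rfl), ← h.cj22 k m (.inr rfl), cj_cm, cm_eq_one h.y22y13, cj_one_left]

end HRel

/-! ### Words in a free group commuting with two generators -/

/-- A reduced word commuting with a letter `a` different from its last letter is empty: otherwise
both `a w` and `w a` are computed without cancellation at the end of `w`, and comparing letters
makes every letter of `w` equal to `a`. -/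
lemma free_commute_two {α : Type*} [DecidableEq α] {a b : α} (hab : a ≠ b) (n : FreeGroup α)
    (ha : Commute n (FreeGroup.of a)) (hb : Commute n (FreeGroup.of b)) : n = 1 := by
  have key : ∀ c : α, Commute n (FreeGroup.of c) → ∀ l x, n.toWord = l ++ [x] → x.1 ≠ c → False := by
    intro c hc l x hl hx
    have hred : FreeGroup.IsReduced (n.toWord ++ [(c, true)]) := by
      have h1 : FreeGroup.IsReduced n.toWord := FreeGroup.isReduced_toWord
      rw [hl] at h1 ⊢
      unfold FreeGroup.IsReduced at h1 ⊢
      rw [List.isChain_append]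
      refine ⟨h1, by simp, ?_⟩
      intro y hy z hz
      simp at hy hz
      subst hy hz
      intro h; exact absurd h hx
    have h2 : (n * FreeGroup.of c).toWord = n.toWord ++ [(c, true)] := by
      rw [FreeGroup.toWord_mul, FreeGroup.toWord_of, hred.reduce_eq]
    have h3 : (FreeGroup.of c * n).toWord = n.toWord ++ [(c, true)] := by rw [← hc.eq, h2]
    rw [FreeGroup.toWord_mul, FreeGroup.toWord_of, List.singleton_append, FreeGroup.reduce.cons,
      FreeGroup.reduce_toWord] at h3
    have h4 : (c, true) :: n.toWord = n.toWord ++ [(c, true)] := by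
      revert h3
      cases hw : n.toWord with
      | nil => simp
      | cons d tl =>
        simp only
        split_ifs with hd
        · intro h; have := congrArg List.length h; simp at this
          omega
        · exact id
    have h5 : ∀ w : List (α × Bool), (c, true) :: w = w ++ [(c, true)] → ∀ y ∈ w, y = (c, true) := by
      intro w
      induction w with
      | nil => simp
      | cons d tl ih =>
        intro h y hy
        simp only [List.cons_append, List.cons.injEq] at h
        obtain ⟨rfl, h⟩ := h
        rcases List.mem_cons.1 hy with rfl | hy
        · rfl
        · exact ih h y hy
    have := h5 _ h4 x (by rw [hl]; simp)
    exact hx (by rw [this])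
  by_contra hn
  have hne : n.toWord ≠ [] := fun h => hn (FreeGroup.toWord_eq_nil_iff.1 h)
  obtain ⟨l, x, hl⟩ := List.eq_nil_or_concat' n.toWord |>.resolve_left hne
  by_cases hx : x.1 = a
  · exact key b hb l x hl (by rw [hx]; exact hab)
  · exact key a ha l x hl hx

/-! ### The extension of the presented group by `ℤ²` -/

/-- The abstract group given by the presentation. -/
abbrev TT := PresentedGroup TGen3.rels

/-- The conjugating word `z₂₂^m z₃₁^{-m}`. -/
def w22 (m : ℤ) : FreeGroup TGen3 := z22 ^ m * z31 ^ (-m)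

/-- The conjugating word `z₁₃^k z₂₂^{m-k} z₃₁^{-m}`. -/
def w13 (k m : ℤ) : FreeGroup TGen3 := z13 ^ k * z22 ^ (m - k) * z31 ^ (-m)

/-- The endomorphism of the free group conjugating the generators of index `22` by `w22 m` and
those of index `13` by `w13 k m`. It permutes the relators and will become conjugation by
`s^k t^m`. -/
def Phi (k m : ℤ) : FreeGroup TGen3 →* FreeGroup TGen3 :=
  FreeGroup.lift fun
    | .x31 => .of x31
    | .y31 => .of y31
    | .x22 => cj (.of x22) (w22 m)
    | .y22 => cj (.of y22) (w22 m)
    | .x13 => cj (.of x13) (w13 k m)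
    | .y13 => cj (.of y13) (w13 k m)

section Phi
variable (k m k' m' : ℤ)

@[simp] lemma Phi_x31 : Phi k m (.of x31) = .of x31 := by simp [Phi]
@[simp] lemma Phi_y31 : Phi k m (.of y31) = .of y31 := by simp [Phi]
@[simp] lemma Phi_x22 : Phi k m (.of x22) = cj (.of x22) (w22 m) := by simp [Phi]
@[simp] lemma Phi_y22 : Phi k m (.of y22) = cj (.of y22) (w22 m) := by simp [Phi]
@[simp] lemma Phi_x13 : Phi k m (.of x13) = cj (.of x13) (w13 k m) := by simp [Phi]
@[simp] lemma Phi_y13 : Phi k m (.of y13) = cj (.of y13) (w13 k m) := by simp [Phi]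

lemma cj_mul_left {G : Type*} [Group G] (a b g : G) : cj a g * cj b g = cj (a * b) g := by
  unfold cj; group

lemma cj_cj {G : Type*} [Group G] (a b c : G) : cj (cj a b) c = cj a (b * c) := by
  unfold cj; group

lemma cj_zpow {G : Type*} [Group G] (a g : G) (n : ℤ) : cj a g ^ n = cj (a ^ n) g := by
  have : ∀ b : G, cj b g = MulAut.conj g⁻¹ b := by intro b; simp [cj]
  rw [this, this, map_zpow]

lemma Phi_z31 : Phi k m z31 = z31 := by simp [z31]
lemma Phi_z22 : Phi k m z22 = cj z22 (w22 m) := by simp [z22, cj_mul_left]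
lemma Phi_z13 : Phi k m z13 = cj z13 (w13 k m) := by simp [z13, cj_mul_left]

lemma Phi_w22 : w22 m * Phi k m (w22 m') = w22 (m + m') := by
  rw [w22.eq_def m', map_mul, map_zpow, map_zpow, Phi_z31, Phi_z22, cj_zpow]
  unfold w22 cj
  group

lemma Phi_w13 : w13 k m * Phi k m (w13 k' m') = w13 (k + k') (m + m') := by
  rw [w13.eq_def k' m']
  simp only [map_mul, map_zpow, Phi_z31, Phi_z22, Phi_z13, cj_zpow]
  unfold w13 w22 cj
  group

lemma Phi_comp : (Phi k m).comp (Phi k' m') = Phi (k + k') (m + m') := by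
  ext i
  cases i <;>
    simp only [MonoidHom.comp_apply, Phi_x31, Phi_y31, Phi_x22, Phi_y22, Phi_x13, Phi_y13, map_cj,
      cj_cj, Phi_w22, Phi_w13]

lemma Phi_zero : Phi 0 0 = MonoidHom.id _ := by
  ext i
  cases i <;> simp [w22, w13, cj]

lemma Phi_rels {r : FreeGroup TGen3} (hr : r ∈ TGen3.rels) : Phi k m r ∈ TGen3.rels := by
  obtain ⟨k', m', hr⟩ := hr
  refine ⟨k + k', m + m', ?_⟩
  simp only [← w22.eq_def, ← w13.eq_def] at hr ⊢
  rcases hr with rfl | rfl | rfl | rfl | rfl | rfl <;>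
    simp only [map_cm, Phi_x31, Phi_y31, Phi_x22, Phi_y22, Phi_x13, Phi_y13, map_cj,
      cj_cj, Phi_w22, Phi_w13, true_or, or_true]

/-- The endomorphism of `TT` induced by `Phi k m`. -/
def PhiT : TT →* TT :=
  PresentedGroup.toGroup (f := fun i => PresentedGroup.mk TGen3.rels (Phi k m (.of i))) (by
    intro r hr
    have : FreeGroup.lift (fun i => PresentedGroup.mk TGen3.rels (Phi k m (.of i))) =
        (PresentedGroup.mk TGen3.rels).comp (Phi k m) := by
      ext i; simp
    rw [this]
    exact PresentedGroup.one_of_mem (Phi_rels k m hr))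

lemma PhiT_mk (x : FreeGroup TGen3) :
    PhiT k m (PresentedGroup.mk _ x) = PresentedGroup.mk _ (Phi k m x) := by
  have : (PhiT k m).comp (PresentedGroup.mk _) = (PresentedGroup.mk _).comp (Phi k m) := by
    ext i
    exact FreeGroup.lift_apply_of
  exact DFunLike.congr_fun this x

lemma PhiT_of (i : TGen3) : PhiT k m (PresentedGroup.of i) = PresentedGroup.mk _ (Phi k m (.of i)) :=
  PhiT_mk k m (.of i)

lemma PhiT_comp : (PhiT k m).comp (PhiT k' m') = PhiT (k + k') (m + m') := by
  ext i
  simp only [MonoidHom.comp_apply, PhiT_of, PhiT_mk]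
  rw [← Phi_comp]; rfl

lemma PhiT_zero : PhiT 0 0 = MonoidHom.id _ := by
  ext i
  rw [PhiT_of, Phi_zero]
  rfl

end Phi

/-- The group `ℤ²`, written multiplicatively. -/
abbrev ZZ := Multiplicative (ℤ × ℤ)

/-- The action of `ℤ²` on `TT`. -/
def act : ZZ →* MulAut TT where
  toFun g := MonoidHom.toMulEquiv (PhiT g.toAdd.1 g.toAdd.2) (PhiT (-g.toAdd.1) (-g.toAdd.2))
    (by rw [PhiT_comp]; simp [PhiT_zero]) (by rw [PhiT_comp]; simp [PhiT_zero])
  map_one' := by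
    ext x
    show PhiT 0 0 x = x
    rw [PhiT_zero]; rfl
  map_mul' g h := by
    ext x
    show PhiT (g.toAdd.1 + h.toAdd.1) (g.toAdd.2 + h.toAdd.2) x = PhiT _ _ (PhiT _ _ x)
    rw [← PhiT_comp]; rfl

lemma act_apply (g : ZZ) (x : TT) : act g x = PhiT g.toAdd.1 g.toAdd.2 x := rfl

/-- The extension `TT ⋊ ℤ²`. It is presented by `HRel`. -/
abbrev HH := TT ⋊[act] ZZ

/-- The inclusion of `TT` in `HH`. -/
def jj : TT →* HH := SemidirectProduct.inl

/-- The images of the six generators in `HH`. -/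
def eH (i : TGen3) : HH := jj (PresentedGroup.of i)

/-- The stable element `s`. The inverse makes right conjugation `x ↦ s⁻¹ x s` act as
`Phi 1 0`. -/
def sH : HH := SemidirectProduct.inr (Multiplicative.ofAdd (-1, 0))

/-- The stable element `t`, with `x ↦ t⁻¹ x t` acting as `Phi 0 1`. -/
def tH : HH := SemidirectProduct.inr (Multiplicative.ofAdd (0, -1))

lemma cj_sH (x : TT) : cj (jj x) sH = jj (PhiT 1 0 x) := by
  have h1 := SemidirectProduct.inl_aut (φ := act) (Multiplicative.ofAdd (1, 0)) x
  rw [act_apply] at h1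
  have h2 : sH⁻¹ = SemidirectProduct.inr (Multiplicative.ofAdd (1, 0)) := by
    rw [sH, ← map_inv]; rfl
  exact (h1.trans (by rw [cj, h2, map_inv, ← h2, inv_inv]; rfl)).symm

lemma cj_tH (x : TT) : cj (jj x) tH = jj (PhiT 0 1 x) := by
  have h1 := SemidirectProduct.inl_aut (φ := act) (Multiplicative.ofAdd (0, 1)) x
  rw [act_apply] at h1
  have h2 : tH⁻¹ = SemidirectProduct.inr (Multiplicative.ofAdd (0, 1)) := by
    rw [tH, ← map_inv]; rfl
  exact (h1.trans (by rw [cj, h2, map_inv, ← h2, inv_inv]; rfl)).symm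

/-- The projection of the free group to `HH`. -/
def qq : FreeGroup TGen3 →* HH := jj.comp (PresentedGroup.mk _)

lemma cj_sH_q (x : FreeGroup TGen3) : cj (qq x) sH = qq (Phi 1 0 x) := by
  unfold qq; rw [MonoidHom.comp_apply, cj_sH, PhiT_mk]; rfl

lemma cj_tH_q (x : FreeGroup TGen3) : cj (qq x) tH = qq (Phi 0 1 x) := by
  unfold qq; rw [MonoidHom.comp_apply, cj_tH, PhiT_mk]; rfl

lemma qq_rel {r : FreeGroup TGen3} (hr : r ∈ TGen3.rels) : qq r = 1 := by
  unfold qq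
  rw [MonoidHom.comp_apply, PresentedGroup.one_of_mem hr, map_one]

lemma qq_of (i : TGen3) : qq (.of i) = eH i := rfl

lemma qq_z31 : qq z31 = eH y31 * eH x31 := by simp [z31, qq_of]
lemma qq_z22 : qq z22 = eH y22 * eH x22 := by simp [z22, qq_of]
lemma qq_z13 : qq z13 = eH y13 * eH x13 := by simp [z13, qq_of]

lemma commute_of_cj_self {G : Type*} [Group G] {a g : G} (h : cj a g = a) : Commute g a := by
  have := commute_of_cj (g := g) (h := 1) (a := a) (by rw [h]; simp [cj])
  simpa using this

lemma hrelH : HRel eH sH tH := by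
  have hv : ∀ a, cj (eH a) tH = qq (cj (.of a) (w22 1)) →
      Commute (tH * (eH y31 * eH x31) * (eH y22 * eH x22)⁻¹) (eH a) := by
    intro a h
    rw [map_cj, qq_of] at h
    have := commute_of_cj h
    simpa [w22, qq_z31, qq_z22, mul_assoc] using this
  have hu : ∀ a, cj (eH a) sH = qq (cj (.of a) (w13 1 0)) →
      Commute (sH * (eH y22 * eH x22) * (eH y13 * eH x13)⁻¹) (eH a) := by
    intro a h
    rw [map_cj, qq_of] at h
    have := commute_of_cj h
    simpa [w13, qq_z13, qq_z22, mul_assoc] using this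
  have hc : ∀ a b, cm (.of a) (.of b) ∈ TGen3.rels → Commute (eH a) (eH b) := by
    intro a b h
    have := qq_rel h
    rw [map_cm] at this
    exact commute_of_cm this
  have w220 : w22 0 = 1 := by simp [w22]
  have w1301 : w13 0 1 = w22 1 := by simp [w22, w13]
  have one : ∀ x : FreeGroup TGen3, cj x 1 = x := by intro x; simp [cj]
  constructor
  · exact hc _ _ ⟨0, 0, by simp [cj]⟩
  · exact hc _ _ ⟨0, 0, by simp [cj]⟩
  · exact hc _ _ ⟨0, 0, by simp [cj]⟩
  · exact hc _ _ ⟨0, 0, by simp [cj]⟩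
  · exact hc _ _ ⟨0, 0, by simp [cj]⟩
  · exact hc _ _ ⟨0, 0, by simp [cj]⟩
  · exact commute_of_cj_self (by rw [← qq_of, cj_sH_q, Phi_x31])
  · exact commute_of_cj_self (by rw [← qq_of, cj_sH_q, Phi_y31])
  · exact commute_of_cj_self (by rw [← qq_of, cj_sH_q, Phi_x22, w220, one])
  · exact commute_of_cj_self (by rw [← qq_of, cj_sH_q, Phi_y22, w220, one])
  · show sH * tH = tH * sH
    unfold sH tH
    rw [← SemidirectProduct.inr.map_mul, ← SemidirectProduct.inr.map_mul, mul_comm (Multiplicative.ofAdd _)]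
  · exact commute_of_cj_self (by rw [← qq_of, cj_tH_q, Phi_x31])
  · exact commute_of_cj_self (by rw [← qq_of, cj_tH_q, Phi_y31])
  · exact hv _ (by rw [← qq_of, cj_tH_q, Phi_x22])
  · exact hv _ (by rw [← qq_of, cj_tH_q, Phi_y22])
  · exact hv _ (by rw [← qq_of, cj_tH_q, Phi_x13, w1301])
  · exact hv _ (by rw [← qq_of, cj_tH_q, Phi_y13, w1301])
  · exact hu _ (by rw [← qq_of, cj_sH_q, Phi_x13])
  · exact hu _ (by rw [← qq_of, cj_sH_q, Phi_y13])

section lift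
variable {G : Type*} [Group G] {e : TGen3 → G} {s t : G}

/-- The homomorphism from the presented group determined by elements satisfying `HRel`. -/
def HRel.liftT (h : HRel e s t) : TT →* G := PresentedGroup.toGroup h.rels_eq_one

lemma HRel.liftT_of (h : HRel e s t) (i : TGen3) : h.liftT (PresentedGroup.of i) = e i :=
  PresentedGroup.toGroup.of _

lemma HRel.liftT_mk (h : HRel e s t) (x : FreeGroup TGen3) :
    h.liftT (PresentedGroup.mk _ x) = FreeGroup.lift e x := rfl

/-- The homomorphism from `ℤ²` determined by the commuting elements `s`, `t`. -/
def HRel.liftZ (h : HRel e s t) : ZZ →* G where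
  toFun g := (s ^ g.toAdd.1 * t ^ g.toAdd.2)⁻¹
  map_one' := by simp
  map_mul' g g' := by
    have h1 : Commute (s ^ g.toAdd.1) (t ^ g'.toAdd.2) := h.st.zpow_zpow _ _
    rw [← mul_inv_rev, toAdd_mul, Prod.fst_add, Prod.snd_add, add_comm, zpow_add,
      add_comm g.toAdd.2, zpow_add]
    congr 1
    simp only [mul_assoc]
    rw [← mul_assoc (s ^ g.toAdd.1), h1.eq, mul_assoc]

/-- The universal property of `HH`. -/
def HRel.lift (h : HRel e s t) : HH →* G :=
  SemidirectProduct.lift h.liftT h.liftZ (by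
    intro g
    ext i
    have hz31 : FreeGroup.lift e z31 = e y31 * e x31 := by simp [z31]
    have hz22 : FreeGroup.lift e z22 = e y22 * e x22 := by simp [z22]
    have hz13 : FreeGroup.lift e z13 = e y13 * e x13 := by simp [z13]
    set k := g.toAdd.1 with hk
    set m := g.toAdd.2 with hm
    have h1 : h.liftT (act g (PresentedGroup.of i)) = FreeGroup.lift e (Phi k m (.of i)) := by
      rw [act_apply, PhiT_of, h.liftT_mk]
    have h2 : MulAut.conj (h.liftZ g) (h.liftT (PresentedGroup.of i)) =
        cj (e i) (s ^ k * t ^ m) := by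
      rw [h.liftT_of, MulAut.conj_apply]
      simp [liftZ, cj, hk, hm]
    refine h1.trans (Eq.trans ?_ h2.symm)
    cases i <;> simp only [Phi_x31, Phi_y31, Phi_x22, Phi_y22, Phi_x13, Phi_y13, map_cj, w22, w13,
      map_mul, map_zpow, hz31, hz22, hz13, FreeGroup.lift_apply_of]
    · exact (h.cj31 k m (.inl rfl)).symm
    · exact (h.cj22 k m (.inl rfl)).symm
    · exact (h.cj13 k m (.inl rfl)).symm
    · exact (h.cj31 k m (.inr rfl)).symm
    · exact (h.cj22 k m (.inr rfl)).symm
    · exact (h.cj13 k m (.inr rfl)).symm)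

lemma HRel.lift_jj (h : HRel e s t) (x : TT) : h.lift (jj x) = h.liftT x :=
  SemidirectProduct.lift_inl ..

@[simp] lemma HRel.lift_e (h : HRel e s t) (i : TGen3) : h.lift (eH i) = e i := by
  unfold eH; rw [h.lift_jj, h.liftT_of]

@[simp] lemma HRel.lift_s (h : HRel e s t) : h.lift sH = s := by
  refine (SemidirectProduct.lift_inr ..).trans ?_
  simp [liftZ]

@[simp] lemma HRel.lift_t (h : HRel e s t) : h.lift tH = t := by
  refine (SemidirectProduct.lift_inr ..).trans ?_
  simp [liftZ]

end lift

/-- `HH` is generated by the six generators, `s` and `t`. -/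
lemma HH_mem (S : Subgroup HH) (he : ∀ i, eH i ∈ S) (hs : sH ∈ S) (ht : tH ∈ S) (x : HH) :
    x ∈ S := by
  rw [← SemidirectProduct.inl_left_mul_inr_right x]
  refine S.mul_mem ?_ ?_
  · have : (⊤ : Subgroup TT) ≤ S.comap jj := by
      rw [← PresentedGroup.closure_range_of, Subgroup.closure_le]
      rintro _ ⟨i, rfl⟩
      exact he i
    exact this (Subgroup.mem_top x.left)
  · have : x.right = (Multiplicative.ofAdd (-1, 0)) ^ (-x.right.toAdd.1) *
        (Multiplicative.ofAdd (0, -1)) ^ (-x.right.toAdd.2) := by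
      apply Multiplicative.toAdd.injective
      ext <;> simp
    rw [this, map_mul, map_zpow, map_zpow]
    exact S.mul_mem (S.zpow_mem hs _) (S.zpow_mem ht _)

/-! ### The relations in `VP 4` -/

section V3
variable {G : Type*} [Group G]

/-- Six elements satisfying the relations of `VP 3` (`lij` in the place of `λ_{i,j}`). In `VP 4`
there are several such sextuples, obtained by omitting a strand or by doubling one. -/
structure V3 (l12 l21 l13 l31 l23 l32 : G) : Prop where
  h123 : l31 * l32 * l12 = l12 * l32 * l31
  h213 : l32 * l31 * l21 = l21 * l31 * l32
  h132 : l21 * l23 * l13 = l13 * l23 * l21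
  h312 : l23 * l21 * l31 = l31 * l21 * l23
  h231 : l12 * l13 * l23 = l23 * l13 * l12
  h321 : l13 * l12 * l32 = l32 * l12 * l13

lemma push {a b c : G} (h : a * b * c = c * b * a) (z : G) :
    a * (b * (c * z)) = c * (b * (a * z)) := by
  simp only [← mul_assoc, h]

lemma pushc {a b : G} (h : Commute a b) (z : G) : a * (b * z) = b * (a * z) := by
  rw [← mul_assoc, h.eq, mul_assoc]

variable {l12 l21 l13 l31 l23 l32 : G}

lemma V3.a21_a12 (h : V3 l12 l21 l13 l31 l23 l32) : Commute (l13 * l23) (l13 * l12) := by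
  have := h.h231
  show _ = _
  simp only [mul_assoc] at this ⊢
  rw [← this]

lemma V3.b21_b12 (h : V3 l12 l21 l13 l31 l23 l32) : Commute (l32 * l31) (l21 * l31) := by
  show _ = _
  simp only [mul_assoc]
  rw [push h.h213]

lemma V3.c11_a21 (h : V3 l12 l21 l13 l31 l23 l32) : Commute (l21 * l12) (l13 * l23) := by
  have h1 := h.h231
  show _ = _
  simp only [mul_assoc] at h1 ⊢
  rw [h1, push h.h132]

lemma V3.c11_b21 (h : V3 l12 l21 l13 l31 l23 l32) : Commute (l21 * l12) (l32 * l31) := by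
  have h1 := h.h123
  show _ = _
  simp only [mul_assoc] at h1 ⊢
  rw [← h1, push h.h213]

lemma V3.v_b12 (h : V3 l12 l21 l13 l31 l23 l32) : Commute (l32 * l23) (l21 * l31) := by
  have h1 := h.h312
  show _ = _
  simp only [mul_assoc] at h1 ⊢
  rw [h1, push h.h213]

lemma V3.v_a12 (h : V3 l12 l21 l13 l31 l23 l32) : Commute (l32 * l23) (l13 * l12) := by
  have h1 := h.h231
  show _ = _
  simp only [mul_assoc] at h1 ⊢
  rw [← h1, push h.h321]

lemma V3.c11_c21 (h : V3 l12 l21 l13 l31 l23 l32) :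
    l21 * l12 * (l32 * l31 * (l13 * l23)) = l32 * l23 * (l21 * l31 * (l13 * l12)) := by
  have h1 := h.h231
  rw [← mul_assoc (l32 * l23), h.v_b12.eq]
  simp only [mul_assoc] at h1 ⊢
  rw [← h1, push h.h123]

/-- Doubling the first index `i` in a relation `λ_{k,i}λ_{k,j}λ_{i,j} = λ_{i,j}λ_{k,j}λ_{k,i}`. -/
lemma dblA {p1 p2 q r1 r2 : G} (h1 : p1 * q * r1 = r1 * q * p1) (h2 : p2 * q * r2 = r2 * q * p2)
    (c1 : Commute p2 r1) (c2 : Commute p1 r2) :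
    p2 * p1 * q * (r1 * r2) = r1 * r2 * q * (p2 * p1) := by
  simp only [mul_assoc]
  rw [push h1, c2.eq, pushc c1, push h2]

/-- Doubling one of the indices `j`, `k` in such a relation. -/
lemma dblB {p q1 q2 r1 r2 : G} (h1 : p * q1 * r1 = r1 * q1 * p) (h2 : p * q2 * r2 = r2 * q2 * p)
    (c1 : Commute q2 r1) (c2 : Commute q1 r2) :
    p * (q1 * q2) * (r1 * r2) = r1 * r2 * (q1 * q2) * p := by
  have h2' : p * (q2 * r2) = r2 * (q2 * p) := by simpa only [mul_assoc] using h2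
  simp only [mul_assoc]
  rw [pushc c1, push h1, h2', pushc c2]

end V3

section VP4

lemma glam_comm_s19 {i j k l : Fin 4} (h : i ≠ j ∧ k ≠ l ∧ i ≠ k ∧ i ≠ l ∧ j ≠ k ∧ j ≠ l) :
    Commute (glam i j : VP 4) (glam k l) := by
  obtain ⟨h1, h2, h3, h4, h5, h6⟩ := h
  have hm : flam i j * flam k l * (flam k l * flam i j)⁻¹ ∈ VPRels 4 :=
    .inl ⟨i, j, k, l, h1, h2, h3, h4, h5, h6, rfl⟩
  have := PresentedGroup.one_of_mem hm
  simp only [flam, h1, h2, dif_pos, ne_eq, not_false_eq_true] at this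
  rw [map_mul, map_inv, mul_inv_eq_one, map_mul, map_mul] at this
  simp only [glam, h1, h2, dif_pos, ne_eq, not_false_eq_true]
  exact this

lemma glam_ybe {i j k : Fin 4} (h : i ≠ j ∧ k ≠ i ∧ k ≠ j) :
    (glam k i * glam k j * glam i j : VP 4) = glam i j * glam k j * glam k i := by
  obtain ⟨h1, h2, h3⟩ := h
  have hm : flam k i * flam k j * flam i j * (flam i j * flam k j * flam k i)⁻¹ ∈ VPRels 4 :=
    .inr ⟨i, j, k, h1, h2, h3, rfl⟩
  have := PresentedGroup.one_of_mem hm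
  simp only [flam, h1, h2, h3, dif_pos, ne_eq, not_false_eq_true] at this
  rw [map_mul, map_inv, mul_inv_eq_one, map_mul, map_mul, map_mul, map_mul] at this
  simp only [glam, h1, h2, h3, dif_pos, ne_eq, not_false_eq_true]
  exact this

/-- The three strands `i`, `j`, `k` of `VP 4`. -/
lemma V3_basic {i j k : Fin 4} (h : i ≠ j ∧ k ≠ i ∧ k ≠ j) :
    V3 (glam i j : VP 4) (glam j i) (glam i k) (glam k i) (glam j k) (glam k j) :=
  ⟨glam_ybe h, glam_ybe ⟨h.1.symm, h.2.2, h.2.1⟩, glam_ybe ⟨h.2.1.symm, h.1.symm, h.2.2.symm⟩,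
    glam_ybe ⟨h.2.1, h.2.2.symm, h.1.symm⟩, glam_ybe ⟨h.2.2.symm, h.1, h.2.1.symm⟩,
    glam_ybe ⟨h.2.2, h.2.1.symm, h.1⟩⟩

/-- The strands `(12)`, `3`, `4`, the first two strands being parallel. -/
lemma V3_first : V3 (glam 0 2 * glam 1 2 : VP 4) (glam 2 1 * glam 2 0) (glam 0 3 * glam 1 3)
    (glam 3 1 * glam 3 0) (glam 2 3) (glam 3 2) where
  h123 := dblA (glam_ybe (by decide)) (glam_ybe (by decide)) (glam_comm_s19 (by decide))
    (glam_comm_s19 (by decide))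
  h213 := dblB (glam_ybe (by decide)) (glam_ybe (by decide)) (glam_comm_s19 (by decide))
    (glam_comm_s19 (by decide))
  h132 := dblA (glam_ybe (by decide)) (glam_ybe (by decide)) (glam_comm_s19 (by decide))
    (glam_comm_s19 (by decide))
  h312 := dblB (glam_ybe (by decide)) (glam_ybe (by decide)) (glam_comm_s19 (by decide))
    (glam_comm_s19 (by decide))
  h231 := (dblB (glam_ybe (by decide)).symm (glam_ybe (by decide)).symm (glam_comm_s19 (by decide))
    (glam_comm_s19 (by decide))).symm
  h321 := (dblB (glam_ybe (by decide)).symm (glam_ybe (by decide)).symm (glam_comm_s19 (by decide))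
    (glam_comm_s19 (by decide))).symm

/-- The strands `1`, `(23)`, `4`. -/
lemma V3_middle : V3 (glam 0 2 * glam 0 1 : VP 4) (glam 1 0 * glam 2 0) (glam 0 3)
    (glam 3 0) (glam 1 3 * glam 2 3) (glam 3 2 * glam 3 1) where
  h123 := dblB (glam_ybe (by decide)) (glam_ybe (by decide)) (glam_comm_s19 (by decide))
    (glam_comm_s19 (by decide))
  h213 := dblA (glam_ybe (by decide)) (glam_ybe (by decide)) (glam_comm_s19 (by decide))
    (glam_comm_s19 (by decide))
  h132 := (dblB (glam_ybe (by decide)).symm (glam_ybe (by decide)).symm (glam_comm_s19 (by decide))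
    (glam_comm_s19 (by decide))).symm
  h312 := (dblB (glam_ybe (by decide)).symm (glam_ybe (by decide)).symm (glam_comm_s19 (by decide))
    (glam_comm_s19 (by decide))).symm
  h231 := dblA (glam_ybe (by decide)) (glam_ybe (by decide)) (glam_comm_s19 (by decide))
    (glam_comm_s19 (by decide))
  h321 := dblB (glam_ybe (by decide)) (glam_ybe (by decide)) (glam_comm_s19 (by decide))
    (glam_comm_s19 (by decide))

/-- The strands `1`, `2`, `(34)`. -/
lemma V3_last : V3 (glam 0 1 : VP 4) (glam 1 0) (glam 0 3 * glam 0 2) (glam 2 0 * glam 3 0)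
    (glam 1 3 * glam 1 2) (glam 2 1 * glam 3 1) where
  h123 := (dblB (glam_ybe (by decide)).symm (glam_ybe (by decide)).symm (glam_comm_s19 (by decide))
    (glam_comm_s19 (by decide))).symm
  h213 := (dblB (glam_ybe (by decide)).symm (glam_ybe (by decide)).symm (glam_comm_s19 (by decide))
    (glam_comm_s19 (by decide))).symm
  h132 := dblB (glam_ybe (by decide)) (glam_ybe (by decide)) (glam_comm_s19 (by decide))
    (glam_comm_s19 (by decide))
  h312 := dblA (glam_ybe (by decide)) (glam_ybe (by decide)) (glam_comm_s19 (by decide))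
    (glam_comm_s19 (by decide))
  h231 := dblB (glam_ybe (by decide)) (glam_ybe (by decide)) (glam_comm_s19 (by decide))
    (glam_comm_s19 (by decide))
  h321 := dblA (glam_ybe (by decide)) (glam_ybe (by decide)) (glam_comm_s19 (by decide))
    (glam_comm_s19 (by decide))

/-- The six generators of `T₃`. -/
def eV : TGen3 → VP 4
  | .x31 => a31
  | .x22 => a22
  | .x13 => a13
  | .y31 => b31
  | .y22 => b22
  | .y13 => b13

/-- `a₂₂` in the form given by doubling the last strand. -/
lemma a22_eq : a22 = glam 0 3 * glam 0 2 * (glam 1 3 * glam 1 2) := by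
  have : Commute (glam 1 3 : VP 4) (glam 0 2) := glam_comm_s19 (by decide)
  simp only [a22, mul_assoc]
  rw [pushc this]

/-- `b₂₂` in the form given by doubling the last strand. -/
lemma b22_eq : b22 = glam 2 1 * glam 3 1 * (glam 2 0 * glam 3 0) := by
  have : Commute (glam 2 0 : VP 4) (glam 3 1) := glam_comm_s19 (by decide)
  simp only [b22, mul_assoc]
  rw [pushc this]

lemma v_eq : c21 * (b31 * a31) * (b22 * a22)⁻¹ = glam 3 2 * glam 2 3 := by
  rw [mul_inv_eq_iff_eq_mul]
  have := V3_first.c11_c21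
  simpa only [c21, b21, a21, b31, a31, b22, a22, mul_assoc] using this

lemma u_eq : c11 * (b22 * a22) * (b13 * a13)⁻¹ =
    glam 2 1 * glam 3 1 * (glam 1 3 * glam 1 2) := by
  rw [mul_inv_eq_iff_eq_mul]
  have := V3_last.c11_c21
  rw [a22_eq, b22_eq]
  simpa only [c11, b11, a11, b13, a13, mul_assoc] using this

lemma hrelV : HRel eV c11 c21 := by
  have hF := V3_first
  have hM := V3_middle
  have hL := V3_last
  have h124 := V3_basic (i := 0) (j := 1) (k := 3) (by decide)
  have h123 := V3_basic (i := 0) (j := 1) (k := 2) (by decide)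
  have h134 := V3_basic (i := 0) (j := 2) (k := 3) (by decide)
  have a31_eq : a31 = glam 0 3 * (glam 1 3 * glam 2 3) := mul_assoc _ _ _
  have b31_eq : b31 = glam 3 2 * (glam 3 1 * glam 3 0) := mul_assoc _ _ _
  have b13_eq : b13 = glam 1 0 * (glam 2 0 * glam 3 0) := mul_assoc _ _ _
  have a13_eq : a13 = glam 0 3 * (glam 0 2 * glam 0 1) := mul_assoc _ _ _
  have a22_eq' : a22 = glam 0 3 * glam 1 3 * (glam 0 2 * glam 1 2) := mul_assoc _ _ _
  have b22_eq' : b22 = glam 2 1 * glam 2 0 * (glam 3 1 * glam 3 0) := mul_assoc _ _ _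
  constructor <;> try simp only [eV, v_eq, u_eq]
  · rw [a22_eq']; exact hF.a21_a12
  · rw [a31_eq, a13_eq]; exact hM.a21_a12
  · rw [a22_eq]; exact hL.a21_a12
  · rw [b31_eq, b22_eq']; exact hF.b21_b12
  · exact hM.b21_b12
  · rw [b22_eq, b13_eq]; exact hL.b21_b12
  · exact h124.c11_a21.mul_right ((glam_comm_s19 (by decide)).mul_left (glam_comm_s19 (by decide)))
  · rw [b31_eq]
    exact ((glam_comm_s19 (by decide)).mul_left (glam_comm_s19 (by decide))).mul_right h124.c11_b21
  · rw [a22_eq]; exact hL.c11_a21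
  · rw [b22_eq]; exact hL.c11_b21
  · exact h123.c11_b21.mul_right h123.c11_a21
  · exact hF.c11_a21
  · rw [b31_eq]; exact hF.c11_b21
  · rw [a22_eq']; exact hF.v_a12
  · rw [b22_eq']; exact hF.v_b12
  · exact h134.v_a12.mul_right ((glam_comm_s19 (by decide)).mul_left (glam_comm_s19 (by decide)))
  · rw [b13_eq]
    exact ((glam_comm_s19 (by decide)).mul_left (glam_comm_s19 (by decide))).mul_right h134.v_b12
  · exact hL.v_a12
  · rw [b13_eq]; exact hL.v_b12

end VP4

/-! ### Two representations of `VP 4` by automorphisms of a free group -/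

/-- The free group of rank four. -/
abbrev W := FreeGroup (Fin 4)

/-- The generators of `W`. -/
abbrev X (i : Fin 4) : W := FreeGroup.of i

/-- Two automorphisms of a free group agreeing on the generators are equal. -/
lemma aut_ext {f g : MulAut W} (h : ∀ m, f (X m) = g (X m)) : f = g := by
  have : f.toMonoidHom = g.toMonoidHom := by ext m; exact h m
  ext x
  exact DFunLike.congr_fun this x

/-- The automorphism of `W` conjugating `X j` by `X i` and fixing the other generators; for
`i = j` it is the identity. -/
def L (i j : Fin 4) : MulAut W :=
  MonoidHom.toMulEquiv
    (FreeGroup.lift fun m => if m = j then X i * X m * (X i)⁻¹ else X m)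
    (FreeGroup.lift fun m => if m = j then (X i)⁻¹ * X m * X i else X m)
    (by
      ext m
      by_cases hm : m = j <;> by_cases hi : i = j <;> simp [hm, hi, mul_assoc])
    (by
      ext m
      by_cases hm : m = j <;> by_cases hi : i = j <;> simp [hm, hi, mul_assoc])

lemma L_X (i j m : Fin 4) : L i j (X m) = if m = j then X i * X m * (X i)⁻¹ else X m :=
  FreeGroup.lift_apply_of

lemma L_self (i : Fin 4) : L i i = 1 := by
  apply aut_ext
  intro m
  rw [L_X]
  split_ifs with h
  · subst h; simp
  · rfl

/-- Commuting relations hold for `L`, and also after transposing the indices. -/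
lemma L_comm {i j k l : Fin 4} (hil : i ≠ l) (hjk : j ≠ k) (hjl : j ≠ l) :
    L i j * L k l = L k l * L i j := by
  apply aut_ext
  intro m
  simp only [MulAut.mul_apply, L_X]
  by_cases h1 : m = j <;> by_cases h2 : m = l <;>
    simp [h1, h2, L_X, hil, hjl, hjk.symm, hjl.symm]

lemma L_ybe {i j k : Fin 4} (hij : i ≠ j) (hki : k ≠ i) (hkj : k ≠ j) :
    L k i * L k j * L i j = L i j * L k j * L k i := by
  apply aut_ext
  intro m
  simp only [MulAut.mul_apply]
  by_cases h1 : m = i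
  · subst h1; simp [L_X, hij, hkj]
  · by_cases h2 : m = j
    · subst h2; simp [L_X, hij, hki, hkj, hij.symm, mul_assoc]
    · simp [L_X, h1, h2]

lemma L_ybe' {i j k : Fin 4} (hij : i ≠ j) (hki : k ≠ i) (hkj : k ≠ j) :
    L i k * L j k * L j i = L j i * L j k * L i k := by
  apply aut_ext
  intro m
  simp only [MulAut.mul_apply]
  by_cases h1 : m = i
  · subst h1; simp [L_X, hki.symm, hkj.symm]
  · by_cases h2 : m = k
    · subst h2; simp [L_X, hki, hij.symm, hki.symm, hkj.symm, mul_assoc]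
    · simp [L_X, h1, h2]

/-- The representation `λ_{i,j} ↦ L i j`. -/
def R0 : VP 4 →* MulAut W :=
  PresentedGroup.toGroup (f := fun p : VPGen 4 => L p.1.1 p.1.2) (by
    rintro r (⟨i, j, k, l, h1, h2, h3, h4, h5, h6, rfl⟩ | ⟨i, j, k, h1, h2, h3, rfl⟩)
    · simp only [flam, dif_pos h1, dif_pos h2, map_mul, map_inv, FreeGroup.lift_apply_of,
        mul_inv_eq_one]
      exact L_comm h4 h5 h6
    · simp only [flam, dif_pos h1, dif_pos h2, dif_pos h3, map_mul, map_inv,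
        FreeGroup.lift_apply_of, mul_inv_eq_one]
      exact L_ybe h1 h2 h3)

/-- The transposed representation `λ_{i,j} ↦ L j i`. -/
def Rinf : VP 4 →* MulAut W :=
  PresentedGroup.toGroup (f := fun p : VPGen 4 => L p.1.2 p.1.1) (by
    rintro r (⟨i, j, k, l, h1, h2, h3, h4, h5, h6, rfl⟩ | ⟨i, j, k, h1, h2, h3, rfl⟩)
    · simp only [flam, dif_pos h1, dif_pos h2, map_mul, map_inv, FreeGroup.lift_apply_of,
        mul_inv_eq_one]
      exact L_comm h5 h4 h3
    · simp only [flam, dif_pos h1, dif_pos h2, dif_pos h3, map_mul, map_inv,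
        FreeGroup.lift_apply_of, mul_inv_eq_one]
      exact L_ybe' h1 h2 h3)

lemma R0_glam (i j : Fin 4) : R0 (glam i j) = L i j := by
  unfold glam
  split_ifs with h
  · exact PresentedGroup.toGroup.of _
  · rw [not_not] at h
    subst h
    rw [map_one, L_self]

lemma Rinf_glam (i j : Fin 4) : Rinf (glam i j) = L j i := by
  unfold glam
  split_ifs with h
  · exact PresentedGroup.toGroup.of _
  · rw [not_not] at h
    subst h
    rw [map_one, L_self]

/-- `R0` maps the generator `i` of `T₃` to the automorphism conjugating `X m` by `cw0 i m`. -/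
def cw0 : TGen3 → Fin 4 → W
  | .x31 => ![1, 1, 1, X 2 * X 1 * X 0]
  | .x22 => ![1, 1, X 1 * X 0, X 1 * X 0]
  | .x13 => ![X 0, X 0, X 0, X 0]
  | .y31 => ![X 3, X 3, X 3, X 3]
  | .y22 => ![X 3 * X 2, X 3 * X 2, 1, 1]
  | .y13 => ![X 3 * X 2 * X 1, 1, 1, 1]

/-- `Rinf` maps the generator `i` of `T₃` to the automorphism conjugating `X m` by
`cwInf i m`. -/
def cwInf : TGen3 → Fin 4 → W
  | .x31 => ![X 3, X 3, X 3, X 3]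
  | .x22 => ![X 2 * X 3, X 2 * X 3, 1, 1]
  | .x13 => ![X 1 * X 2 * X 3, 1, 1, 1]
  | .y31 => ![1, 1, 1, X 0 * X 1 * X 2]
  | .y22 => ![1, 1, X 0 * X 1, X 0 * X 1]
  | .y13 => ![X 0, X 0, X 0, X 0]

lemma R0_eV (i : TGen3) (m : Fin 4) : R0 (eV i) (X m) = cw0 i m * X m * (cw0 i m)⁻¹ := by
  cases i <;> fin_cases m <;>
    simp [eV, a31, a22, a13, b31, b22, b13, R0_glam, L_X, MulAut.mul_apply, cw0, mul_assoc]

lemma Rinf_eV (i : TGen3) (m : Fin 4) :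
    Rinf (eV i) (X m) = cwInf i m * X m * (cwInf i m)⁻¹ := by
  cases i <;> fin_cases m <;>
    simp [eV, a31, a22, a13, b31, b22, b13, Rinf_glam, L_X, MulAut.mul_apply, cwInf, mul_assoc]

lemma R0_a22_c11 : R0 (a22 * c11) = MulAut.conj (X 1 * X 0) := by
  apply aut_ext
  intro m
  fin_cases m <;>
    simp [a22, c11, b11, a11, R0_glam, L_X, MulAut.mul_apply, mul_assoc]

lemma R0_b22_v : R0 (b22 * (glam 3 2 * glam 2 3)) = MulAut.conj (X 3 * X 2) := by
  apply aut_ext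
  intro m
  fin_cases m <;>
    simp [b22, R0_glam, L_X, MulAut.mul_apply, mul_assoc]

lemma R0_a13 : R0 a13 = MulAut.conj (X 0) := by
  apply aut_ext
  intro m
  fin_cases m <;> simp [a13, R0_glam, L_X, MulAut.mul_apply, mul_assoc]

lemma R0_b31 : R0 b31 = MulAut.conj (X 3) := by
  apply aut_ext
  intro m
  fin_cases m <;> simp [b31, R0_glam, L_X, MulAut.mul_apply, mul_assoc]

/-! ### Two free subgroups normalised by the presented group -/

section iota
variable {G : Type*} [Group G] {e : TGen3 → G} {s t : G}

/-- The element `v = t z₃₁ z₂₂⁻¹`. -/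
def vv (e : TGen3 → G) (t : G) : G := t * (e y31 * e x31) * (e y22 * e x22)⁻¹

/-- The element `u = s z₂₂ z₁₃⁻¹`. -/
def uu (e : TGen3 → G) (s : G) : G := s * (e y22 * e x22) * (e y13 * e x13)⁻¹

/-- A homomorphism from `W` to `G` intertwining the representation `R0` with conjugation. -/
def io0 (e : TGen3 → G) (s t : G) : W →* G :=
  FreeGroup.lift ![e x13, e x22 * s * (e x13)⁻¹, (e y31)⁻¹ * (e y22 * vv e t), e y31]

/-- A homomorphism from `W` to `G` intertwining the representation `Rinf` with conjugation. -/
def ioInf (e : TGen3 → G) (s t : G) : W →* G :=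
  FreeGroup.lift ![e y13, (e y13)⁻¹ * (e y22 * s), e x22 * vv e t * (e x31)⁻¹, e x31]

lemma io0_X0 : io0 e s t (X 0) = e x13 := FreeGroup.lift_apply_of
lemma io0_X1 : io0 e s t (X 1) = e x22 * s * (e x13)⁻¹ := FreeGroup.lift_apply_of
lemma io0_X2 : io0 e s t (X 2) = (e y31)⁻¹ * (e y22 * vv e t) := FreeGroup.lift_apply_of
lemma io0_X3 : io0 e s t (X 3) = e y31 := FreeGroup.lift_apply_of
lemma ioInf_X0 : ioInf e s t (X 0) = e y13 := FreeGroup.lift_apply_of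
lemma ioInf_X1 : ioInf e s t (X 1) = (e y13)⁻¹ * (e y22 * s) := FreeGroup.lift_apply_of
lemma ioInf_X2 : ioInf e s t (X 2) = e x22 * vv e t * (e x31)⁻¹ := FreeGroup.lift_apply_of
lemma ioInf_X3 : ioInf e s t (X 3) = e x31 := FreeGroup.lift_apply_of

lemma conj_eq {P a c x : G} (hP : P = a * c) (hc : Commute c x) :
    P * x * P⁻¹ = a * x * a⁻¹ := by
  subst hP
  have : c * x * c⁻¹ = x := by rw [hc.eq, mul_inv_cancel_right]
  calc a * c * x * (a * c)⁻¹ = a * (c * x * c⁻¹) * a⁻¹ := by group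
    _ = _ := by rw [this]

lemma conj_eq_one {a x : G} (hc : Commute a x) : 1 * x * 1⁻¹ = a * x * a⁻¹ := by
  rw [hc.eq]; group

lemma HRel.svv (h : HRel e s t) : Commute s (vv e t) :=
  (h.st.mul_right (h.sy31.mul_right h.sx31)).mul_right (h.sy22.mul_right h.sx22).inv_right

lemma HRel.t_eq (h : HRel e s t) : e y22 * vv e t * e x22 = t * (e y31 * e x31) := by
  have h1 : vv e t * (e y22 * e x22) = t * (e y31 * e x31) := by unfold vv; group
  have h2 : Commute (vv e t) (e y22) := h.vy22
  rw [← h1, ← h2.eq, mul_assoc]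

lemma s_eq : s * (e y22 * e x22) = uu e s * (e y13 * e x13) := by unfold uu; group

/-- In `VP 4` this says that `a₃₁ = λ₁₄λ₂₄λ₃₄` and `X 2 * X 1 * X 0` act alike on `X 3`. -/
lemma HRel.io0_210 (h : HRel e s t) : io0 e s t (X 2 * X 1 * X 0) = e x31 * (t * s) := by
  rw [map_mul, map_mul, io0_X0, io0_X1, io0_X2]
  calc _ = (e y31)⁻¹ * (e y22 * vv e t * e x22) * s := by group
    _ = (e y31)⁻¹ * (t * e y31) * e x31 * s := by rw [h.t_eq]; group
    _ = t * e x31 * s := by rw [h.ty31.eq]; group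
    _ = _ := by rw [h.tx31.eq, mul_assoc]

lemma io0_10 : io0 e s t (X 1 * X 0) = e x22 * s := by
  rw [map_mul, io0_X0, io0_X1]; group

lemma io0_32 : io0 e s t (X 3 * X 2) = e y22 * vv e t := by
  rw [map_mul, io0_X3, io0_X2]; group

lemma HRel.io0_321 (h : HRel e s t) :
    io0 e s t (X 3 * X 2 * X 1) = e y13 * (vv e t * uu e s) := by
  have h1 : Commute (vv e t) (e y22) := h.vy22
  have h2 : Commute (vv e t) (e y13) := h.vy13
  have h3 : Commute (uu e s) (e y13) := h.uy13
  have h4 : Commute s (e y22 * e x22) := h.sy22.mul_right h.sx22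
  rw [map_mul, io0_32, io0_X1, ← h1.eq]
  calc _ = vv e t * (e y22 * e x22 * s) * (e x13)⁻¹ := by group
    _ = vv e t * uu e s * e y13 := by rw [← h4.eq, s_eq]; group
    _ = _ := (h2.mul_left h3).eq

lemma ioInf_23 : ioInf e s t (X 2 * X 3) = e x22 * vv e t := by
  rw [map_mul, ioInf_X2, ioInf_X3]; group

lemma ioInf_01 : ioInf e s t (X 0 * X 1) = e y22 * s := by
  rw [map_mul, ioInf_X0, ioInf_X1]; group

lemma HRel.ioInf_012 (h : HRel e s t) : ioInf e s t (X 0 * X 1 * X 2) = e y31 * (t * s) := by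
  have h1 : Commute (vv e t) (e x22) := h.vx22
  rw [map_mul, ioInf_01, ioInf_X2]
  calc _ = e y22 * (s * (e x22 * vv e t)) * (e x31)⁻¹ := by group
    _ = (e y22 * vv e t * e x22) * s * (e x31)⁻¹ := by
        rw [(h.sx22.mul_right h.svv).eq, ← h1.eq]; group
    _ = t * e y31 * (e x31 * s) * (e x31)⁻¹ := by rw [h.t_eq]; group
    _ = t * e y31 * s := by rw [← h.sx31.eq]; group
    _ = _ := by rw [h.ty31.eq, mul_assoc]

lemma HRel.ioInf_123 (h : HRel e s t) :
    ioInf e s t (X 1 * X 2 * X 3) = e x13 * (uu e s * vv e t) := by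
  have h2 : Commute (uu e s) (e y13) := h.uy13
  have h3 : Commute (uu e s) (e x13) := h.ux13
  rw [mul_assoc, map_mul, ioInf_23, ioInf_X1]
  calc _ = (e y13)⁻¹ * (e y22 * s) * e x22 * vv e t := by group
    _ = (e y13)⁻¹ * (s * (e y22 * e x22)) * vv e t := by rw [← h.sy22.eq]; group
    _ = (e y13)⁻¹ * (uu e s * e y13) * e x13 * vv e t := by rw [s_eq]; group
    _ = uu e s * e x13 * vv e t := by rw [h2.eq]; group
    _ = _ := by rw [h3.eq, mul_assoc]

/-- The elements `cw0 i m` and `e i` act in the same way on the image of `X m`. -/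
lemma HRel.io0_equiv (h : HRel e s t) (i : TGen3) (m : Fin 4) :
    io0 e s t (cw0 i m * X m * (cw0 i m)⁻¹) = e i * io0 e s t (X m) * (e i)⁻¹ := by
  have vx22 : Commute (vv e t) (e x22) := h.vx22
  have vy22 : Commute (vv e t) (e y22) := h.vy22
  have vx13 : Commute (vv e t) (e x13) := h.vx13
  have vy13 : Commute (vv e t) (e y13) := h.vy13
  have ux13 : Commute (uu e s) (e x13) := h.ux13
  have sX2 : Commute s (io0 e s t (X 2)) := by
    rw [io0_X2]; exact h.sy31.inv_right.mul_right (h.sy22.mul_right h.svv)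
  have vX1 : Commute (vv e t) (io0 e s t (X 1)) := by
    rw [io0_X1]; exact (vx22.mul_right h.svv.symm).mul_right vx13.inv_right
  rw [map_mul, map_mul, map_inv]
  cases i
  -- `x31`: the third generator `X 2` is rewritten through `X 2 * X 1 * X 0`.
  · have c0 : Commute (e x31) (io0 e s t (X 0)) := by rw [io0_X0]; exact h.x31x13
    have c1 : Commute (e x31) (io0 e s t (X 1)) := by
      rw [io0_X1]; exact (h.x31x22.mul_right h.sx31.symm).mul_right h.x31x13.inv_right
    have c2 : Commute (e x31) (io0 e s t (X 2)) := by
      have : X 2 = (X 2 * X 1 * X 0) * (X 0)⁻¹ * (X 1)⁻¹ := by group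
      rw [this, map_mul, map_mul, map_inv, map_inv, h.io0_210]
      exact (((Commute.refl _).mul_right (h.tx31.symm.mul_right h.sx31.symm)).mul_right
        c0.inv_right).mul_right c1.inv_right
    fin_cases m
    · exact (congrArg (fun z => z * _ * z⁻¹) (map_one _)).trans (conj_eq_one c0)
    · exact (congrArg (fun z => z * _ * z⁻¹) (map_one _)).trans (conj_eq_one c1)
    · exact (congrArg (fun z => z * _ * z⁻¹) (map_one _)).trans (conj_eq_one c2)
    · exact conj_eq h.io0_210 (io0_X3 (e := e) ▸ h.ty31.mul_left h.sy31)
  · have c0 : Commute (e x22) (io0 e s t (X 0)) := by rw [io0_X0]; exact h.x22x13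
    have c1 : Commute (e x22) (io0 e s t (X 1)) := by
      rw [io0_X1]
      exact ((Commute.refl _).mul_right h.sx22.symm).mul_right h.x22x13.inv_right
    fin_cases m
    · exact (congrArg (fun z => z * _ * z⁻¹) (map_one _)).trans (conj_eq_one c0)
    · exact (congrArg (fun z => z * _ * z⁻¹) (map_one _)).trans (conj_eq_one c1)
    · exact conj_eq io0_10 sX2
    · exact conj_eq io0_10 (io0_X3 (e := e) ▸ h.sy31)
  · fin_cases m <;> exact congrArg (fun z => z * _ * z⁻¹) io0_X0
  · fin_cases m <;> exact congrArg (fun z => z * _ * z⁻¹) io0_X3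
  · have c2 : Commute (e y22) (io0 e s t (X 2)) := by
      rw [io0_X2]
      exact h.y31y22.symm.inv_right.mul_right ((Commute.refl _).mul_right vy22.symm)
    have c3 : Commute (e y22) (io0 e s t (X 3)) := by rw [io0_X3]; exact h.y31y22.symm
    fin_cases m
    · exact conj_eq io0_32 (io0_X0 (e := e) ▸ vx13)
    · exact conj_eq io0_32 vX1
    · exact (congrArg (fun z => z * _ * z⁻¹) (map_one _)).trans (conj_eq_one c2)
    · exact (congrArg (fun z => z * _ * z⁻¹) (map_one _)).trans (conj_eq_one c3)
  -- `y13`: here `X 1` is rewritten through `X 3 * X 2 * X 1`.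
  · have c2 : Commute (e y13) (io0 e s t (X 2)) := by
      rw [io0_X2]
      exact h.y31y13.symm.inv_right.mul_right (h.y22y13.symm.mul_right vy13.symm)
    have c3 : Commute (e y13) (io0 e s t (X 3)) := by rw [io0_X3]; exact h.y31y13.symm
    have c1 : Commute (e y13) (io0 e s t (X 1)) := by
      have : X 1 = (X 2)⁻¹ * (X 3)⁻¹ * (X 3 * X 2 * X 1) := by group
      rw [this, map_mul, map_mul, map_inv, map_inv, h.io0_321]
      exact (c2.inv_right.mul_right c3.inv_right).mul_right
        ((Commute.refl _).mul_right (vy13.symm.mul_right h.uy13.symm))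
    fin_cases m
    · exact conj_eq h.io0_321 (io0_X0 (e := e) ▸ vx13.mul_left ux13)
    · exact (congrArg (fun z => z * _ * z⁻¹) (map_one _)).trans (conj_eq_one c1)
    · exact (congrArg (fun z => z * _ * z⁻¹) (map_one _)).trans (conj_eq_one c2)
    · exact (congrArg (fun z => z * _ * z⁻¹) (map_one _)).trans (conj_eq_one c3)

/-- The elements `cwInf i m` and `e i` act in the same way on the image of `X m`. -/
lemma HRel.ioInf_equiv (h : HRel e s t) (i : TGen3) (m : Fin 4) :
    ioInf e s t (cwInf i m * X m * (cwInf i m)⁻¹) = e i * ioInf e s t (X m) * (e i)⁻¹ := by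
  have vx22 : Commute (vv e t) (e x22) := h.vx22
  have vy22 : Commute (vv e t) (e y22) := h.vy22
  have vx13 : Commute (vv e t) (e x13) := h.vx13
  have vy13 : Commute (vv e t) (e y13) := h.vy13
  have uy13 : Commute (uu e s) (e y13) := h.uy13
  have sX2 : Commute s (ioInf e s t (X 2)) := by
    rw [ioInf_X2]; exact (h.sx22.mul_right h.svv).mul_right h.sx31.inv_right
  have vX1 : Commute (vv e t) (ioInf e s t (X 1)) := by
    rw [ioInf_X1]; exact vy13.inv_right.mul_right (vy22.mul_right h.svv.symm)
  rw [map_mul, map_mul, map_inv]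
  cases i
  · fin_cases m <;> exact congrArg (fun z => z * _ * z⁻¹) ioInf_X3
  · have c2 : Commute (e x22) (ioInf e s t (X 2)) := by
      rw [ioInf_X2]
      exact ((Commute.refl _).mul_right vx22.symm).mul_right h.x31x22.symm.inv_right
    have c3 : Commute (e x22) (ioInf e s t (X 3)) := by rw [ioInf_X3]; exact h.x31x22.symm
    fin_cases m
    · exact conj_eq ioInf_23 (ioInf_X0 (e := e) ▸ vy13)
    · exact conj_eq ioInf_23 vX1
    · exact (congrArg (fun z => z * _ * z⁻¹) (map_one _)).trans (conj_eq_one c2)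
    · exact (congrArg (fun z => z * _ * z⁻¹) (map_one _)).trans (conj_eq_one c3)
  -- `x13`: here `X 1` is rewritten through `X 1 * X 2 * X 3`.
  · have c2 : Commute (e x13) (ioInf e s t (X 2)) := by
      rw [ioInf_X2]
      exact (h.x22x13.symm.mul_right vx13.symm).mul_right h.x31x13.symm.inv_right
    have c3 : Commute (e x13) (ioInf e s t (X 3)) := by rw [ioInf_X3]; exact h.x31x13.symm
    have c1 : Commute (e x13) (ioInf e s t (X 1)) := by
      have : X 1 = (X 1 * X 2 * X 3) * (X 3)⁻¹ * (X 2)⁻¹ := by group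
      rw [this, map_mul, map_mul, map_inv, map_inv, h.ioInf_123]
      exact (((Commute.refl _).mul_right (h.ux13.symm.mul_right vx13.symm)).mul_right
        c3.inv_right).mul_right c2.inv_right
    fin_cases m
    · exact conj_eq h.ioInf_123 (ioInf_X0 (e := e) ▸ uy13.mul_left vy13)
    · exact (congrArg (fun z => z * _ * z⁻¹) (map_one _)).trans (conj_eq_one c1)
    · exact (congrArg (fun z => z * _ * z⁻¹) (map_one _)).trans (conj_eq_one c2)
    · exact (congrArg (fun z => z * _ * z⁻¹) (map_one _)).trans (conj_eq_one c3)
  -- `y31`: here `X 2` is rewritten through `X 0 * X 1 * X 2`.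
  · have c0 : Commute (e y31) (ioInf e s t (X 0)) := by rw [ioInf_X0]; exact h.y31y13
    have c1 : Commute (e y31) (ioInf e s t (X 1)) := by
      rw [ioInf_X1]; exact h.y31y13.inv_right.mul_right (h.y31y22.mul_right h.sy31.symm)
    have c2 : Commute (e y31) (ioInf e s t (X 2)) := by
      have : X 2 = (X 1)⁻¹ * (X 0)⁻¹ * (X 0 * X 1 * X 2) := by group
      rw [this, map_mul, map_mul, map_inv, map_inv, h.ioInf_012]
      exact (c1.inv_right.mul_right c0.inv_right).mul_right
        ((Commute.refl _).mul_right (h.ty31.symm.mul_right h.sy31.symm))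
    fin_cases m
    · exact (congrArg (fun z => z * _ * z⁻¹) (map_one _)).trans (conj_eq_one c0)
    · exact (congrArg (fun z => z * _ * z⁻¹) (map_one _)).trans (conj_eq_one c1)
    · exact (congrArg (fun z => z * _ * z⁻¹) (map_one _)).trans (conj_eq_one c2)
    · exact conj_eq h.ioInf_012 (ioInf_X3 (e := e) ▸ h.tx31.mul_left h.sx31)
  · have c0 : Commute (e y22) (ioInf e s t (X 0)) := by rw [ioInf_X0]; exact h.y22y13
    have c1 : Commute (e y22) (ioInf e s t (X 1)) := by
      rw [ioInf_X1]
      exact h.y22y13.inv_right.mul_right ((Commute.refl _).mul_right h.sy22.symm)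
    fin_cases m
    · exact (congrArg (fun z => z * _ * z⁻¹) (map_one _)).trans (conj_eq_one c0)
    · exact (congrArg (fun z => z * _ * z⁻¹) (map_one _)).trans (conj_eq_one c1)
    · exact conj_eq ioInf_01 sX2
    · exact conj_eq ioInf_01 (ioInf_X3 (e := e) ▸ h.sx31)
  · fin_cases m <;> exact congrArg (fun z => z * _ * z⁻¹) ioInf_X0

end iota

/-! ### Equivariance and elements of the kernel -/

/-- The homomorphism whose injectivity is to be proved. -/
def fT : TT →* VP 4 := hrelV.liftT

lemma fT_of (i : TGen3) : fT (PresentedGroup.of i) = eV i := hrelV.liftT_of i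

/-- Equivariance on the generators extends to the whole group. -/
lemma equiv_all (R : VP 4 →* MulAut W) (io : W →* HH)
    (h : ∀ i m, io (R (eV i) (X m)) = eH i * io (X m) * (eH i)⁻¹) (w : TT) (g : W) :
    io (R (fT w) g) = jj w * io g * (jj w)⁻¹ := by
  let S : Subgroup TT :=
    { carrier := {w | ∀ g, io (R (fT w) g) = jj w * io g * (jj w)⁻¹}
      one_mem' := fun g => by simp
      mul_mem' := fun {a b} ha hb g => by
        simp only [Set.mem_ofPred_eq] at ha hb
        rw [map_mul, map_mul, MulAut.mul_apply, ha, hb, map_mul]; group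
      inv_mem' := fun {a} ha g => by
        simp only [Set.mem_ofPred_eq] at ha
        have := ha (R (fT a)⁻¹ g)
        rw [map_inv, MulAut.apply_inv_self] at this
        rw [this, map_inv, map_inv, map_inv]; group }
  have : (⊤ : Subgroup TT) ≤ S := by
    rw [← PresentedGroup.closure_range_of, Subgroup.closure_le]
    rintro _ ⟨i, rfl⟩ g
    have h1 : io.comp (R (eV i)).toMonoidHom = (MulAut.conj (eH i)).toMonoidHom.comp io := by
      exact FreeGroup.ext_hom _ _ fun m => h i m
    rw [fT_of]
    exact DFunLike.congr_fun h1 g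
  exact this (Subgroup.mem_top w) g

/-- The homomorphism `io0` for `HH`. -/
abbrev iH0 : W →* HH := io0 eH sH tH

/-- The homomorphism `ioInf` for `HH`. -/
abbrev iHInf : W →* HH := ioInf eH sH tH

lemma iH0_equiv (w : TT) (g : W) : iH0 (R0 (fT w) g) = jj w * iH0 g * (jj w)⁻¹ :=
  equiv_all R0 iH0 (fun i m => by rw [R0_eV]; exact hrelH.io0_equiv i m) w g

lemma iHInf_equiv (w : TT) (g : W) : iHInf (Rinf (fT w) g) = jj w * iHInf g * (jj w)⁻¹ :=
  equiv_all Rinf iHInf (fun i m => by rw [Rinf_eV]; exact hrelH.ioInf_equiv i m) w g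

lemma ker_commute0 {w : TT} (hw : fT w = 1) (g : W) : Commute (jj w) (iH0 g) := by
  have := iH0_equiv w g
  rw [hw, map_one, MulAut.one_apply, eq_mul_inv_iff_mul_eq] at this
  exact this.symm

lemma ker_commuteInf {w : TT} (hw : fT w = 1) (g : W) : Commute (jj w) (iHInf g) := by
  have := iHInf_equiv w g
  rw [hw, map_one, MulAut.one_apply, eq_mul_inv_iff_mul_eq] at this
  exact this.symm

/-- `R0` restricts to the conjugation action on the image of `iH0`. Together with the triviality
of the centre of `W` this makes the map to `VP 4` injective on that image. -/
lemma R0_iH0 (n : W) : R0 (hrelV.lift (iH0 n)) = MulAut.conj n := by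
  have : (R0.comp hrelV.lift).comp iH0 = MulAut.conj := by
    ext1 m
    simp only [MonoidHom.comp_apply]
    fin_cases m
    · exact (congrArg (fun z => R0 (hrelV.lift z)) io0_X0).trans
        (by rw [HRel.lift_e]; exact R0_a13)
    · refine (congrArg (fun z => R0 (hrelV.lift z)) io0_X1).trans ?_
      simp only [map_mul, map_inv, HRel.lift_e, HRel.lift_s]
      have h1 := R0_a22_c11
      rw [map_mul] at h1
      rw [show eV x22 = a22 from rfl, show eV x13 = a13 from rfl, h1, R0_a13, ← map_inv,
        ← map_mul, mul_inv_cancel_right]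
      rfl
    · refine (congrArg (fun z => R0 (hrelV.lift z)) io0_X2).trans ?_
      have h1 := R0_b22_v
      have h2 : hrelV.lift (vv eH tH) = glam 3 2 * glam 2 3 := by
        unfold vv
        simp only [map_mul, map_inv, HRel.lift_e, HRel.lift_t]
        exact v_eq
      have h3 : hrelV.lift ((eH y31)⁻¹ * (eH y22 * vv eH tH)) =
          b31⁻¹ * (b22 * (glam 3 2 * glam 2 3)) := by
        rw [map_mul, map_mul, map_inv, HRel.lift_e, HRel.lift_e, h2]; rfl
      rw [h3, map_mul, map_inv, h1, R0_b31, ← map_inv, ← map_mul, inv_mul_cancel_left]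
      rfl
    · exact (congrArg (fun z => R0 (hrelV.lift z)) io0_X3).trans
        (by rw [HRel.lift_e]; exact R0_b31)
  exact DFunLike.congr_fun this n

lemma eq_one_of_mem_range {w : TT} (hw : fT w = 1) {n : W} (hn : iH0 n = jj w) : w = 1 := by
  have h1 := R0_iH0 n
  rw [hn, hrelV.lift_jj, show hrelV.liftT w = fT w from rfl, hw, map_one] at h1
  have h2 : ∀ g, Commute n g := by
    intro g
    have : n * g * n⁻¹ = g := by rw [← MulAut.conj_apply, ← h1]; rfl
    exact mul_inv_eq_iff_eq_mul.1 this
  have h3 : n = 1 := free_commute_two (a := (0 : Fin 4)) (b := 1) (by decide) n (h2 _) (h2 _)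
  rw [h3, map_one] at hn
  exact SemidirectProduct.inl_injective (hn.symm.trans (map_one _).symm)

/-! ### The quotient of `HH` by the first free subgroup -/

/-- The permutation of `ℤ ⊕ ℤ` shifting the left copy by `q` and the right copy by `p`. -/
def shift : ZZ →* Equiv.Perm (ℤ ⊕ ℤ) where
  toFun g := Equiv.sumCongr (Equiv.addRight g.toAdd.2) (Equiv.addRight g.toAdd.1)
  map_one' := by ext (x | x) <;> simp
  map_mul' g h := by
    ext (x | x) <;> simp <;> ring

/-- The induced action on the free group on `ℤ ⊕ ℤ`. -/
def shiftAct : ZZ →* MulAut (FreeGroup (ℤ ⊕ ℤ)) where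
  toFun g := FreeGroup.freeGroupCongr (shift g)
  map_one' := by
    ext x
    rw [map_one]
    exact FreeGroup.map.id x
  map_mul' g h := by
    ext x
    rw [map_mul]
    exact (FreeGroup.map.comp _ _ x).symm

/-- A model of the quotient of `HH` by the image of `iH0`: the right-angled Artin group on the path
`a — s — v — b`. The left letter `k` stands for `v^k a v^{-k}` and the right letter `k` for
`s^k b s^{-k}`. -/
abbrev PP := FreeGroup (ℤ ⊕ ℤ) ⋊[shiftAct] ZZ

lemma shiftAct_of (g : ZZ) (x : ℤ ⊕ ℤ) : shiftAct g (.of x) = .of (shift g x) :=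
  FreeGroup.map.of

/-- The vertex `a`. -/
def aP : PP := SemidirectProduct.inl (.of (.inl 0))
/-- The vertex `b`. -/
def bP : PP := SemidirectProduct.inl (.of (.inr 0))
/-- The vertex `s`. -/
def sP : PP := SemidirectProduct.inr (Multiplicative.ofAdd (1, 0))
/-- The vertex `v`. -/
def vP : PP := SemidirectProduct.inr (Multiplicative.ofAdd (0, 1))

lemma PP_conj (g : ZZ) (x : ℤ ⊕ ℤ) :
    (SemidirectProduct.inr g : PP) * SemidirectProduct.inl (.of x) *
      (SemidirectProduct.inr g)⁻¹ = SemidirectProduct.inl (.of (shift g x)) := by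
  have := SemidirectProduct.inl_aut (φ := shiftAct) g (.of x)
  rw [shiftAct_of] at this
  rw [this, map_inv]

lemma sP_vP : Commute sP vP := by
  show sP * vP = vP * sP
  unfold sP vP
  rw [← SemidirectProduct.inr.map_mul, ← SemidirectProduct.inr.map_mul,
    mul_comm (Multiplicative.ofAdd _)]

lemma sP_aP : Commute sP aP := by
  have := PP_conj (Multiplicative.ofAdd (1, 0)) (.inl 0)
  exact mul_inv_eq_iff_eq_mul.1 this

lemma vP_bP : Commute vP bP := by
  have := PP_conj (Multiplicative.ofAdd (0, 1)) (.inr 0)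
  exact mul_inv_eq_iff_eq_mul.1 this

/-- The centralisers of the two end vertices meet trivially: the exponents of `v` and `s` vanish by
comparing conjugate letters, and the free part commutes with two distinct letters. -/
lemma PP_centralizer {x : PP} (ha : Commute x aP) (hb : Commute x bP) : x = 1 := by
  -- The homomorphism counting occurrences of the letter `y`.
  have count : ∀ (y z : ℤ ⊕ ℤ) (n : FreeGroup (ℤ ⊕ ℤ)),
      n * .of z * n⁻¹ = FreeGroup.of y → z = y := by
    intro y z n hn
    have := congrArg (FreeGroup.lift fun c => Multiplicative.ofAdd (if c = y then (1 : ℤ) else 0)) hn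
    simp only [map_mul, map_inv, FreeGroup.lift_apply_of, mul_inv_cancel_comm] at this
    by_contra hzy
    simp [hzy] at this
    have h2 := congrArg Multiplicative.toAdd this
    simp at h2
  have main : ∀ y : ℤ ⊕ ℤ, Commute x (SemidirectProduct.inl (.of y)) →
      x.left * .of (shift x.right y) * x.left⁻¹ = .of y := by
    intro y hy
    have h1 : x * SemidirectProduct.inl (.of y) * x⁻¹ = SemidirectProduct.inl (.of y) := by
      rw [hy.eq, mul_inv_cancel_right]
    have h2 : x = SemidirectProduct.inl x.left * SemidirectProduct.inr x.right :=
      (SemidirectProduct.inl_left_mul_inr_right x).symm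
    apply SemidirectProduct.inl_injective (φ := shiftAct)
    rw [← h1]
    conv_rhs => rw [h2]
    rw [map_mul, map_mul, map_inv, ← PP_conj, mul_inv_rev]
    simp only [mul_assoc]
  have ma := main _ ha
  have mb := main _ hb
  have ea := count _ _ _ ma
  have eb := count _ _ _ mb
  rw [ea] at ma
  rw [eb] at mb
  have hq : x.right.toAdd.2 = 0 := by simpa [shift] using ea
  have hp : x.right.toAdd.1 = 0 := by simpa [shift] using eb
  have hr : x.right = 1 := Multiplicative.toAdd.injective (Prod.ext hp hq)
  have hl : x.left = 1 := free_commute_two (a := (.inl 0 : ℤ ⊕ ℤ)) (b := .inr 0) (by simp) _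
    (mul_inv_eq_iff_eq_mul.1 ma) (mul_inv_eq_iff_eq_mul.1 mb)
  exact SemidirectProduct.ext hl hr

/-- The images of the six generators in `PP`. -/
def eP : TGen3 → PP
  | .x31 => aP
  | .x22 => sP⁻¹
  | .x13 => 1
  | .y31 => 1
  | .y22 => vP⁻¹
  | .y13 => bP

lemma hrelP : HRel eP sP (sP⁻¹ * aP⁻¹) := by
  have hsa := sP_aP
  have hsv := sP_vP
  have hvb := vP_bP
  have hv : sP⁻¹ * aP⁻¹ * (1 * aP) * (vP⁻¹ * sP⁻¹)⁻¹ = vP := by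
    rw [mul_inv_rev, inv_inv, inv_inv]; group
  have hu : sP * (vP⁻¹ * sP⁻¹) * (bP * 1)⁻¹ = vP⁻¹ * bP⁻¹ := by
    rw [← mul_assoc, hsv.inv_right.eq]; group
  constructor <;> try simp only [eP, hv, hu]
  · exact hsa.symm.inv_right
  · exact Commute.one_right _
  · exact Commute.one_right _
  · exact Commute.one_left _
  · exact Commute.one_left _
  · exact hvb.inv_left
  · exact hsa
  · exact Commute.one_right _
  · exact (Commute.refl _).inv_right
  · exact hsv.inv_right
  · exact (Commute.refl _).inv_right.mul_right hsa.inv_right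
  · exact hsa.symm.inv_right.symm.mul_left (Commute.refl _).inv_left
  · exact Commute.one_right _
  · exact hsv.symm.inv_right
  · exact (Commute.refl _).inv_right
  · exact Commute.one_right _
  · exact hvb
  · exact Commute.one_right _
  · exact hvb.inv_left.mul_left (Commute.refl _).inv_left

/-- The quotient map. -/
def proj : HH →* PP := hrelP.lift

lemma commute_sv : Commute sH (vv eH tH) := hrelH.svv

/-- The map from `ℤ²` to `HH` given by `s` and `v`. -/
def secZ : ZZ →* HH where
  toFun g := sH ^ g.toAdd.1 * vv eH tH ^ g.toAdd.2
  map_one' := by simp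
  map_mul' g h := by
    have h1 : Commute (sH ^ h.toAdd.1) (vv eH tH ^ g.toAdd.2) := commute_sv.zpow_zpow _ _
    rw [toAdd_mul, Prod.fst_add, Prod.snd_add, zpow_add, zpow_add]
    simp only [mul_assoc]
    rw [← mul_assoc (sH ^ h.toAdd.1), h1.eq, mul_assoc]

/-- The section of `proj`. -/
def sec : PP →* HH :=
  SemidirectProduct.lift
    (FreeGroup.lift (Sum.elim (fun k => vv eH tH ^ k * eH x31 * (vv eH tH ^ k)⁻¹)
      (fun k => sH ^ k * eH y13 * (sH ^ k)⁻¹))) secZ (by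
    intro g
    refine FreeGroup.ext_hom _ _ fun x => ?_
    set p := g.toAdd.1 with hp
    set q := g.toAdd.2 with hq
    have hz : secZ g = sH ^ p * vv eH tH ^ q := rfl
    have hsv : Commute (sH ^ p) (vv eH tH ^ q) := commute_sv.zpow_zpow _ _
    simp only [MonoidHom.comp_apply, MulEquiv.coe_toMonoidHom, shiftAct_of,
      FreeGroup.lift_apply_of, MulAut.conj_apply, hz]
    rcases x with k | k
    · have h1 : Commute (sH ^ p) (vv eH tH ^ k * eH x31 * (vv eH tH ^ k)⁻¹) :=
        (((commute_sv.zpow_right k).mul_right hrelH.sx31).mul_right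
          (commute_sv.zpow_right k).inv_right).zpow_left p
      rw [hsv.eq]
      refine Eq.trans ?_ (conj_eq rfl h1).symm
      show vv eH tH ^ (k + q) * eH x31 * (vv eH tH ^ (k + q))⁻¹ = _
      rw [add_comm, zpow_add]; group
    · have hvy : Commute (vv eH tH) (eH y13) := hrelH.vy13
      have h1 : Commute (vv eH tH ^ q) (sH ^ k * eH y13 * (sH ^ k)⁻¹) :=
        (((commute_sv.symm.zpow_right k).mul_right hvy).mul_right
          (commute_sv.symm.zpow_right k).inv_right).zpow_left q
      refine Eq.trans ?_ (conj_eq rfl h1).symm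
      show sH ^ (k + p) * eH y13 * (sH ^ (k + p))⁻¹ = _
      rw [add_comm, zpow_add]; group)

lemma sec_aP : sec aP = eH x31 := by
  refine (SemidirectProduct.lift_inl ..).trans ?_
  simp
lemma sec_bP : sec bP = eH y13 := by
  refine (SemidirectProduct.lift_inl ..).trans ?_
  simp
lemma sec_sP : sec sP = sH := by
  refine (SemidirectProduct.lift_inr ..).trans ?_
  simp [secZ]
lemma sec_vP : sec vP = vv eH tH := by
  refine (SemidirectProduct.lift_inr ..).trans ?_
  simp [secZ]

/-- The image of `iH0` is normal: it is normalised by the six generators by equivariance, and `s`,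
`t` are products of generators with elements of the image. -/
lemma range_normal : iH0.range.Normal := by
  have hj : ∀ w : TT, jj w ∈ Subgroup.normalizer (iH0.range : Set HH) := by
    intro w
    rw [Subgroup.mem_normalizer_iff]
    intro h
    constructor
    · rintro ⟨g, rfl⟩
      exact ⟨_, iH0_equiv w g⟩
    · rintro ⟨g, hg⟩
      refine ⟨R0 (fT w⁻¹) g, ?_⟩
      rw [iH0_equiv, hg, map_inv]; group
  have hr : ∀ g, iH0 g ∈ Subgroup.normalizer (iH0.range : Set HH) :=
    fun g => Subgroup.le_normalizer ⟨g, rfl⟩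
  have hs : sH ∈ Subgroup.normalizer (iH0.range : Set HH) := by
    have : sH = (jj (PresentedGroup.of x22))⁻¹ * iH0 (X 1 * X 0) := by
      rw [io0_10]; exact (inv_mul_cancel_left _ _).symm
    rw [this]
    exact Subgroup.mul_mem _ (Subgroup.inv_mem _ (hj _)) (hr _)
  have ht : tH ∈ Subgroup.normalizer (iH0.range : Set HH) := by
    have : tH = (jj (PresentedGroup.of x31))⁻¹ * iH0 (X 2 * X 1 * X 0) * sH⁻¹ := by
      rw [hrelH.io0_210]
      show _ = (eH x31)⁻¹ * _ * _
      group
    rw [this]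
    exact Subgroup.mul_mem _ (Subgroup.mul_mem _ (Subgroup.inv_mem _ (hj _)) (hr _))
      (Subgroup.inv_mem _ hs)
  rw [← Subgroup.normalizer_eq_top_iff, eq_top_iff]
  exact fun x _ => HH_mem _ (fun i => hj _) hs ht x

/-- `sec ∘ proj` is the identity modulo the image of `iH0`. -/
lemma sec_proj (x : HH) : (sec (proj x))⁻¹ * x ∈ iH0.range := by
  have := range_normal
  have key : ∀ x : HH, (sec (proj x))⁻¹ * x ∈ iH0.range ↔
      x ∈ MonoidHom.eqLocus ((QuotientGroup.mk' iH0.range).comp (sec.comp proj))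
        (QuotientGroup.mk' iH0.range) := by
    intro x
    exact QuotientGroup.eq.symm
  have he : ∀ i, proj (eH i) = eP i := hrelP.lift_e
  have hs : proj sH = sP := hrelP.lift_s
  have ht : proj tH = sP⁻¹ * aP⁻¹ := hrelP.lift_t
  rw [key]
  apply HH_mem
  · intro i
    rw [← key, he]
    cases i <;> simp only [eP, map_inv, map_one, sec_aP, sec_bP, sec_sP, sec_vP, inv_inv, inv_one,
      one_mul, inv_mul_cancel]
    · exact Subgroup.one_mem _
    · exact ⟨X 1 * X 0, by rw [io0_10, hrelH.sx22.eq]⟩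
    · exact ⟨X 0, io0_X0⟩
    · exact ⟨X 3, io0_X3⟩
    · have : Commute (vv eH tH) (eH y22) := hrelH.vy22
      exact ⟨X 3 * X 2, by rw [io0_32, this.eq]⟩
    · exact Subgroup.one_mem _
  · rw [← key, hs, sec_sP, inv_mul_cancel]
    exact Subgroup.one_mem _
  · rw [← key, ht]
    refine ⟨X 2 * X 1 * X 0, ?_⟩
    rw [hrelH.io0_210, map_mul, map_inv, map_inv, sec_sP, sec_aP, mul_inv_rev, inv_inv, inv_inv,
      hrelH.st.symm.eq, mul_assoc]

/-! ### Injectivity -/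

/-- An element of the kernel commutes with `x₃₁ = ι_∞(X₃)` and `y₁₃ = ι_∞(X₀)`, hence has trivial
image in `PP`, hence lies in the image of `iH0`. -/
lemma fT_injective : Function.Injective fT := by
  rw [injective_iff_map_eq_one]
  intro w hw
  have ha : Commute (proj (jj w)) aP := by
    have := (ker_commuteInf hw (X 3)).map proj
    rw [ioInf_X3] at this
    rwa [show proj (eH x31) = aP from hrelP.lift_e _] at this
  have hb : Commute (proj (jj w)) bP := by
    have := (ker_commuteInf hw (X 0)).map proj
    rw [ioInf_X0] at this
    rwa [show proj (eH y13) = bP from hrelP.lift_e _] at this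
  have h1 := PP_centralizer ha hb
  have h2 := sec_proj (jj w)
  rw [h1, map_one, inv_one, one_mul] at h2
  obtain ⟨n, hn⟩ := h2
  exact eq_one_of_mem_range hw hn

lemma fT_range : fT.range = Subgroup.closure {a31, a22, a13, b31, b22, b13} := by
  rw [MonoidHom.range_eq_map, ← PresentedGroup.closure_range_of, MonoidHom.map_closure]
  congr 1
  ext x
  simp only [Set.mem_image, Set.mem_range, exists_exists_eq_and, fT_of, Set.mem_insert_iff,
    Set.mem_singleton_iff]
  constructor
  · rintro ⟨i, rfl⟩
    cases i <;> simp [eV]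
  · rintro (rfl | rfl | rfl | rfl | rfl | rfl)
    exacts [⟨x31, rfl⟩, ⟨x22, rfl⟩, ⟨x13, rfl⟩, ⟨y31, rfl⟩, ⟨y22, rfl⟩, ⟨y13, rfl⟩]

/-- Theorem 5.7: the subgroup `T_3 = ⟨a_{31}, a_{22}, a_{13}, b_{31}, b_{22}, b_{13}⟩` of
`VP_4` is presented by these six generators and the relations
`[a_{31}, a_{22}^{c_{22}^m c_{31}^{-m}}] = [a_{31}, a_{13}^{c_{13}^k c_{22}^{m-k} c_{31}^{-m}}]
 = [a_{22}^{c_{22}^m c_{31}^{-m}}, a_{13}^{c_{13}^k c_{22}^{m-k} c_{31}^{-m}}] = 1`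
and their `b`-analogues, for all `k, m ∈ ℤ`. -/
theorem statement19 :
    ∃ f : PresentedGroup TGen3.rels →* VP 4,
      f (PresentedGroup.of TGen3.x31) = a31 ∧
      f (PresentedGroup.of TGen3.x22) = a22 ∧
      f (PresentedGroup.of TGen3.x13) = a13 ∧
      f (PresentedGroup.of TGen3.y31) = b31 ∧
      f (PresentedGroup.of TGen3.y22) = b22 ∧
      f (PresentedGroup.of TGen3.y13) = b13 ∧
      Function.Injective f ∧
      f.range = Subgroup.closure {a31, a22, a13, b31, b22, b13} := by
  exact ⟨fT, fT_of x31, fT_of x22, fT_of x13, fT_of y31, fT_of y22, fT_of y13, fT_injective,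
    fT_range⟩

end Paper
end
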